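/- arXiv:2112.04142 — 2 statements merged into one kernel-verified Lean document; each statement's English description precedes it below -/
import Mathlib

section
/- For all integers m, n ≥ 2 and every edge e of C_{2m} ∨ C_{2n−1} that belongs to the cycle C_{2m}, χ_la((C_{2m} ∨ C_{2n−1}) − e) = 5. -/
open Finset SimpleGraph
open scoped Classical

/-- The induced vertex label (weight) of `x`: the sum of `f` over all edges incident to `x`. -/
noncomputable def vertexWeight {V : Type*} [Fintype V] (G : SimpleGraph V)
    (f : Sym2 V → ℕ) (x : V) : ℕ :=
  ∑ e ∈ G.edgeFinset.filter (fun e => x ∈ e), f e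

/-- `f` is a local antimagic labeling of `G`: it restricts to a bijection from the edge set of
`G` onto `{1, …, q}` (where `q` is the number of edges), and adjacent vertices get distinct
induced vertex labels. -/
def IsLocalAntimagic {V : Type*} [Fintype V] (G : SimpleGraph V) (f : Sym2 V → ℕ) : Prop :=
  Set.BijOn f G.edgeSet (Set.Icc 1 G.edgeSet.ncard) ∧
  ∀ ⦃x y : V⦄, G.Adj x y → vertexWeight G f x ≠ vertexWeight G f y

/-- The number of distinct induced vertex labels, `c(f)`. -/
noncomputable def colorCount {V : Type*} [Fintype V] (G : SimpleGraph V)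
    (f : Sym2 V → ℕ) : ℕ :=
  (Finset.univ.image (vertexWeight G f)).card

/-- The local antimagic chromatic number `χ_la(G)`. -/
noncomputable def chiLA {V : Type*} [Fintype V] (G : SimpleGraph V) : ℕ :=
  sInf { n | ∃ f : Sym2 V → ℕ, IsLocalAntimagic G f ∧ colorCount G f = n }

/-- The join `G ∨ H` of two vertex-disjoint graphs. -/
def joinG {α β : Type*} (G : SimpleGraph α) (H : SimpleGraph β) : SimpleGraph (α ⊕ β) :=
  SimpleGraph.fromRel (fun x y =>
    (∃ a b, x = Sum.inl a ∧ y = Sum.inl b ∧ G.Adj a b) ∨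
    (∃ a b, x = Sum.inr a ∧ y = Sum.inr b ∧ H.Adj a b) ∨
    (∃ a b, x = Sum.inl a ∧ y = Sum.inr b))


/-- Indexing of the edges of the join of two cycles. -/
def edgeOf (p q : ℕ) :
    Fin (p + 3) ⊕ Fin (q + 3) ⊕ (Fin (p + 3) × Fin (q + 3)) →
      Sym2 (Fin (p + 3) ⊕ Fin (q + 3))
  | Sum.inl i => s(Sum.inl i, Sum.inl (i + 1))
  | Sum.inr (Sum.inl j) => s(Sum.inr j, Sum.inr (j + 1))
  | Sum.inr (Sum.inr x) => s(Sum.inl x.1, Sum.inr x.2)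

lemma fin_no_two (p : ℕ) (i j : Fin (p + 3)) (h1 : i = j + 1) (h2 : i + 1 = j) : False := by
  have h : (1 : Fin (p + 3)) + 1 = 0 := by
    have : j + (1 + 1) = j + 0 := by rw [add_zero, ← add_assoc, ← h1, h2]
    exact add_left_cancel this
  have := congrArg Fin.val h
  simp [Fin.val_add] at this
  rw [Nat.mod_eq_of_lt (by omega)] at this
  omega

lemma edgeOf_injective (p q : ℕ) : Function.Injective (edgeOf p q) := by
  rintro (i | j | ⟨i, j⟩) (i' | j' | ⟨i', j'⟩) h <;> simp [edgeOf] at h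
  · rcases h with h | h
    · rw [h]
    · exact (fin_no_two p i i' h.1 h.2).elim
  · rcases h with h | h
    · rw [h]
    · exact (fin_no_two q j j' h.1 h.2).elim
  · rw [h.1, h.2]

lemma range_edgeOf (p q : ℕ) :
    Set.range (edgeOf p q) = (joinG (cycleGraph (p + 3)) (cycleGraph (q + 3))).edgeSet := by
  ext e
  induction e using Sym2.ind with
  | _ x y =>
    rw [SimpleGraph.mem_edgeSet]
    constructor
    · rintro ⟨t, ht⟩
      rw [← SimpleGraph.mem_edgeSet, ← ht]
      rcases t with i | j | ⟨i, j⟩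
      · simp [edgeOf, joinG, cycleGraph_adj]
      · simp [edgeOf, joinG, cycleGraph_adj]
      · simp [edgeOf, joinG]
    · intro h
      rcases x with i | j <;> rcases y with i' | j'
      · simp only [joinG, SimpleGraph.fromRel_adj] at h
        simp [cycleGraph_adj] at h
        rcases h.2 with (h | h) | (h | h)
        · exact ⟨Sum.inl i', by simp [edgeOf, ← h]⟩
        · exact ⟨Sum.inl i, by simp [edgeOf, ← h]⟩
        · exact ⟨Sum.inl i, by simp [edgeOf, ← h]⟩
        · exact ⟨Sum.inl i', by simp [edgeOf, ← h]⟩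
      · exact ⟨Sum.inr (Sum.inr (i, j')), by simp [edgeOf]⟩
      · exact ⟨Sum.inr (Sum.inr (i', j)), by simp [edgeOf]⟩
      · simp only [joinG, SimpleGraph.fromRel_adj] at h
        simp [cycleGraph_adj] at h
        rcases h.2 with (h | h) | (h | h)
        · exact ⟨Sum.inr (Sum.inl j'), by simp [edgeOf, ← h]⟩
        · exact ⟨Sum.inr (Sum.inl j), by simp [edgeOf, ← h]⟩
        · exact ⟨Sum.inr (Sum.inl j), by simp [edgeOf, ← h]⟩
        · exact ⟨Sum.inr (Sum.inl j'), by simp [edgeOf, ← h]⟩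

/-- Sum over the two cycle edges at a vertex. -/
lemma sum_cycle_edges (p : ℕ) (c : Fin (p + 3) → ℕ) (i : Fin (p + 3)) :
    (∑ k, if i = k ∨ i = k + 1 then c k else 0) = c i + c (i - 1) := by
  have hne : i ≠ i - 1 := by
    intro h
    have : i + 1 = i := by
      nth_rewrite 1 [h]; simp
    simp at this
  rw [← Finset.sum_filter]
  have : (Finset.univ.filter fun k : Fin (p + 3) => i = k ∨ i = k + 1) = {i, i - 1} := by
    ext k
    simp only [Finset.mem_filter, Finset.mem_univ, true_and, Finset.mem_insert,
      Finset.mem_singleton]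
    rw [eq_sub_iff_add_eq]
    constructor <;> rintro (h | h) <;> simp [h]
  rw [this, Finset.sum_pair hne]

/-- From numerical data to a labeling. -/
lemma core_labeling (p q : ℕ) (c : Fin (p + 3) → ℕ) (d : Fin (q + 3) → ℕ)
    (M : Fin (p + 3) → Fin (q + 3) → ℕ) (i0 : Fin (p + 3)) (hc0 : c i0 = 0)
    (hinj : Function.Injective (Sum.elim c (Sum.elim d (fun x : Fin (p + 3) × Fin (q + 3) => M x.1 x.2))))
    (hlt : ∀ t, Sum.elim c (Sum.elim d (fun x : Fin (p + 3) × Fin (q + 3) => M x.1 x.2)) t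
      < (p + 3) + ((q + 3) + (p + 3) * (q + 3)))
    (R : Fin (p + 3) → ℕ) (K : Fin (q + 3) → ℕ)
    (hR : ∀ i, c i + c (i - 1) + ∑ j, M i j = R i)
    (hK : ∀ j, d j + d (j - 1) + ∑ i, M i j = K j)
    (hRR : ∀ i, R i ≠ R (i + 1)) (hKK : ∀ j, K j ≠ K (j + 1)) (hRK : ∀ i j, R i ≠ K j)
    (S : Finset ℕ) (hS : S.card ≤ 5) (hRS : ∀ i, R i ∈ S) (hKS : ∀ j, K j ∈ S) :
    ∃ f, IsLocalAntimagic ((joinG (cycleGraph (p + 3)) (cycleGraph (q + 3))).deleteEdges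
      {Sym2.map Sum.inl s(i0, i0 + 1)}) f ∧
      colorCount ((joinG (cycleGraph (p + 3)) (cycleGraph (q + 3))).deleteEdges
      {Sym2.map Sum.inl s(i0, i0 + 1)}) f ≤ 5 := by
  set G := (joinG (cycleGraph (p + 3)) (cycleGraph (q + 3))).deleteEdges
      {Sym2.map Sum.inl s(i0, i0 + 1)} with hG
  set l := Sum.elim c (Sum.elim d (fun x : Fin (p + 3) × Fin (q + 3) => M x.1 x.2)) with hl
  set t0 : Fin (p + 3) ⊕ Fin (q + 3) ⊕ (Fin (p + 3) × Fin (q + 3)) := Sum.inl i0 with ht0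
  have hlt0 : l t0 = 0 := by simp [hl, ht0, hc0]
  have hinjE := edgeOf_injective p q
  let f : Sym2 (Fin (p + 3) ⊕ Fin (q + 3)) → ℕ := fun e => l (Function.invFun (edgeOf p q) e)
  have hf : ∀ t, f (edgeOf p q t) = l t := fun t => by
    simp only [f, Function.leftInverse_invFun hinjE t]
  have hE : G.edgeSet = edgeOf p q '' {t | t ≠ t0} := by
    rw [hG, SimpleGraph.edgeSet_deleteEdges, ← range_edgeOf]
    ext e
    constructor
    · rintro ⟨⟨t, rfl⟩, h⟩
      refine ⟨t, ?_, rfl⟩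
      rintro rfl
      exact h (by simp [edgeOf, ht0])
    · rintro ⟨t, ht, rfl⟩
      refine ⟨⟨t, rfl⟩, ?_⟩
      intro h
      apply ht
      apply hinjE
      rw [h]
      simp [edgeOf, ht0]
  have hcard : G.edgeSet.ncard = (p + 3) + ((q + 3) + (p + 3) * (q + 3)) - 1 := by
    rw [hE, Set.ncard_image_of_injective _ hinjE]
    have : {t | t ≠ t0} = ((Finset.univ.erase t0 : Finset _) : Set _) := by ext; simp
    rw [this, Set.ncard_coe_finset, Finset.card_erase_of_mem (Finset.mem_univ _)]
    simp
  have hsurj : ∀ k < (p + 3) + ((q + 3) + (p + 3) * (q + 3)), ∃ t, l t = k := by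
    intro k hk
    have h1 : Finset.univ.image l = Finset.range ((p + 3) + ((q + 3) + (p + 3) * (q + 3))) := by
      apply Finset.eq_of_subset_of_card_le
      · intro x hx
        obtain ⟨t, -, rfl⟩ := Finset.mem_image.1 hx
        exact Finset.mem_range.2 (hlt t)
      · rw [Finset.card_image_of_injective _ hinj]
        simp
    have h2 : k ∈ Finset.univ.image l := by rw [h1]; exact Finset.mem_range.2 hk
    obtain ⟨t, -, ht⟩ := Finset.mem_image.1 h2
    exact ⟨t, ht⟩
  have hw : ∀ x, vertexWeight G f x = ∑ t, if x ∈ edgeOf p q t then l t else 0 := by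
    intro x
    unfold vertexWeight
    trans ∑ e ∈ (Finset.univ.filter fun t => t ≠ t0 ∧ x ∈ edgeOf p q t).image (edgeOf p q), f e
    · refine Finset.sum_congr ?_ (fun _ _ => rfl)
      ext e
      simp only [Finset.mem_filter, SimpleGraph.mem_edgeFinset, hE, Finset.mem_image,
        Finset.mem_univ, true_and, Set.mem_image, Set.mem_ofPred_eq]
      constructor
      · rintro ⟨⟨t, ht, rfl⟩, hx⟩
        exact ⟨t, ⟨ht, hx⟩, rfl⟩
      · rintro ⟨t, ⟨ht, hx⟩, rfl⟩
        exact ⟨⟨t, ht, rfl⟩, hx⟩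
    rw [Finset.sum_image (fun a _ b _ h => hinjE h), Finset.sum_filter]
    apply Finset.sum_congr rfl
    intro t _
    rw [hf]
    by_cases h : t = t0
    · subst h; simp [hlt0]
    · simp [h]
  have hwl : ∀ i, vertexWeight G f (Sum.inl i) = R i := by
    intro i
    rw [hw, ← hR, Fintype.sum_sum_type, Fintype.sum_sum_type, Fintype.sum_prod_type]
    simp only [edgeOf, hl, Sum.elim_inl, Sum.elim_inr, Sym2.mem_iff, Sum.inl.injEq,
      reduceCtorEq, or_false, or_self, if_false, Finset.sum_const_zero, zero_add]
    rw [sum_cycle_edges]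
    congr 1
    rw [Finset.sum_eq_single i]
    · simp
    · intro b _ hb
      simp [Ne.symm hb]
    · simp
  have hwr : ∀ j, vertexWeight G f (Sum.inr j) = K j := by
    intro j
    rw [hw, ← hK, Fintype.sum_sum_type, Fintype.sum_sum_type, Fintype.sum_prod_type_right]
    simp only [edgeOf, hl, Sum.elim_inl, Sum.elim_inr, Sym2.mem_iff, Sum.inr.injEq,
      reduceCtorEq, false_or, or_self, if_false, Finset.sum_const_zero, zero_add]
    rw [sum_cycle_edges]
    congr 1
    rw [Finset.sum_eq_single j]
    · simp
    · intro b _ hb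
      simp [Ne.symm hb]
    · simp
  refine ⟨f, ⟨⟨?_, ?_, ?_⟩, ?_⟩, ?_⟩
  · intro e he
    rw [hE] at he
    obtain ⟨t, ht, rfl⟩ := he
    rw [hf, hcard]
    have h1 := hlt t
    have h2 : l t ≠ 0 := by
      intro h
      exact ht (hinj (h.trans hlt0.symm))
    constructor <;> omega
  · intro e he e' he' h
    rw [hE] at he he'
    obtain ⟨t, ht, rfl⟩ := he
    obtain ⟨t', ht', rfl⟩ := he'
    rw [hf, hf] at h
    rw [hinj h]
  · intro k hk
    rw [hcard] at hk
    obtain ⟨t, ht⟩ := hsurj k (by have := hk.1; have := hk.2; omega)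
    refine ⟨edgeOf p q t, ?_, by rw [hf, ht]⟩
    rw [hE]
    refine ⟨t, ?_, rfl⟩
    rintro rfl
    have := hk.1
    omega
  · intro x y hxy
    have h1 : s(x, y) ∈ G.edgeSet := hxy
    rw [hE] at h1
    obtain ⟨t, ht, h⟩ := h1
    have key : ∀ t, ∀ x y, edgeOf p q t = s(x, y) → vertexWeight G f x ≠ vertexWeight G f y := by
      rintro (i | j | ⟨i, j⟩) x y h
      all_goals
        simp only [edgeOf, Sym2.eq_iff] at h
        rcases h with ⟨rfl, rfl⟩ | ⟨rfl, rfl⟩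
        all_goals simp only [hwl, hwr]
      · exact hRR i
      · exact (hRR i).symm
      · exact hKK j
      · exact (hKK j).symm
      · exact hRK i j
      · exact (hRK i j).symm
    exact key t x y h
  · unfold colorCount
    refine le_trans (Finset.card_le_card ?_) hS
    intro v hv
    obtain ⟨x, -, rfl⟩ := Finset.mem_image.1 hv
    rcases x with i | j
    · rw [hwl]; exact hRS i
    · rw [hwr]; exact hKS j

/-- Lower bound: every local antimagic labeling has at least five colors. -/
lemma lower_bound (m n : ℕ) (hm : 2 ≤ m) (hn : 2 ≤ n)
    (e : Sym2 (Fin (2 * m)))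
    (f : Sym2 (Fin (2 * m) ⊕ Fin (2 * n - 1)) → ℕ)
    (hf : IsLocalAntimagic ((joinG (cycleGraph (2 * m)) (cycleGraph (2 * n - 1))).deleteEdges
      {Sym2.map Sum.inl e}) f) :
    5 ≤ colorCount ((joinG (cycleGraph (2 * m)) (cycleGraph (2 * n - 1))).deleteEdges
      {Sym2.map Sum.inl e}) f := by
  set G := (joinG (cycleGraph (2 * m)) (cycleGraph (2 * n - 1))).deleteEdges
      {Sym2.map Sum.inl e} with hG
  have hadj := hf.2
  set W := vertexWeight G f with hW
  have hLR : ∀ i j, W (Sum.inl i) ≠ W (Sum.inr j) := by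
    intro i j
    apply hadj
    rw [hG, SimpleGraph.deleteEdges_adj]
    refine ⟨by simp [joinG], ?_⟩
    induction e using Sym2.ind with
    | _ a b => simp
  have hRR : ∀ i j, (cycleGraph (2 * n - 1)).Adj i j → W (Sum.inr i) ≠ W (Sum.inr j) := by
    intro i j hij
    apply hadj
    rw [hG, SimpleGraph.deleteEdges_adj]
    refine ⟨by simp [joinG, hij, hij.ne], ?_⟩
    induction e using Sym2.ind with
    | _ a b => simp
  have hLL : ∀ i j, (cycleGraph (2 * m)).Adj i j → s(i, j) ≠ e →
      W (Sum.inl i) ≠ W (Sum.inl j) := by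
    intro i j hij hne
    apply hadj
    rw [hG, SimpleGraph.deleteEdges_adj]
    refine ⟨by simp [joinG, hij, hij.ne], ?_⟩
    intro h
    apply hne
    rw [Set.mem_singleton_iff] at h
    apply Sym2.map.injective (Sum.inl_injective (β := Fin (2 * n - 1)))
    rw [← h]; rfl
  have h2 : 2 ≤ (Finset.univ.image fun i => W (Sum.inl i)).card := by
    have key : ∃ i j, (cycleGraph (2 * m)).Adj i j ∧ s(i, j) ≠ e := by
      have a1 : (cycleGraph (2 * m)).Adj ⟨0, by omega⟩ ⟨1, by omega⟩ :=
        pathGraph_le_cycleGraph (by rw [pathGraph_adj]; simp)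
      have a2 : (cycleGraph (2 * m)).Adj ⟨1, by omega⟩ ⟨2, by omega⟩ :=
        pathGraph_le_cycleGraph (by rw [pathGraph_adj]; simp)
      by_cases h : s((⟨0, by omega⟩ : Fin (2 * m)), ⟨1, by omega⟩) = e
      · refine ⟨_, _, a2, ?_⟩
        rw [← h]
        simp
      · exact ⟨_, _, a1, h⟩
    obtain ⟨i, j, hij, hne⟩ := key
    have := hLL i j hij hne
    exact Finset.one_lt_card.2 ⟨_, Finset.mem_image_of_mem _ (Finset.mem_univ i), _,
      Finset.mem_image_of_mem _ (Finset.mem_univ j), this⟩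
  have h3 : 3 ≤ (Finset.univ.image fun j => W (Sum.inr j)).card := by
    have hodd : (cycleGraph (2 * n - 1)).chromaticNumber = 3 :=
      chromaticNumber_cycleGraph_of_odd _ (by omega) ⟨n - 1, by omega⟩
    let C : (cycleGraph (2 * n - 1)).Coloring
        (Finset.univ.image fun j => W (Sum.inr j)) :=
      SimpleGraph.Coloring.mk
        (fun j => ⟨W (Sum.inr j), Finset.mem_image_of_mem (fun j => W (Sum.inr j)) (Finset.mem_univ j)⟩)
        (by
          intro i j hij h
          exact hRR i j hij (congrArg Subtype.val h))
    have h := C.colorable.chromaticNumber_le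
    rw [hodd, Fintype.card_coe] at h
    exact_mod_cast h
  unfold colorCount
  have hun : (Finset.univ.image fun i => W (Sum.inl i)) ∪ (Finset.univ.image fun j => W (Sum.inr j))
      ⊆ Finset.univ.image W := by
    intro v hv
    rcases Finset.mem_union.1 hv with hv | hv <;>
    · obtain ⟨i, -, rfl⟩ := Finset.mem_image.1 hv
      exact Finset.mem_image_of_mem _ (Finset.mem_univ _)
  have hdis : Disjoint (Finset.univ.image fun i => W (Sum.inl i))
      (Finset.univ.image fun j => W (Sum.inr j)) := by
    rw [Finset.disjoint_left]
    intro v hv hv'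
    obtain ⟨i, -, rfl⟩ := Finset.mem_image.1 hv
    obtain ⟨j, -, h⟩ := Finset.mem_image.1 hv'
    exact hLR i j h.symm
  have := Finset.card_le_card hun
  rw [Finset.card_union_of_disjoint hdis] at this
  have h5 : 5 ≤ (Finset.univ.image W).card := by omega
  convert h5

lemma fin_val_sub_one (p : ℕ) (k : Fin (p + 3)) :
    (k.val = 0 ∧ (k - 1).val = p + 2) ∨ (∃ i, k.val = i + 1 ∧ (k - 1).val = i) := by
  rcases Nat.eq_zero_or_pos k.val with h | h
  · left
    refine ⟨h, ?_⟩
    have : k = 0 := Fin.ext h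
    subst this
    rw [zero_sub, Fin.coe_neg_one]
  · right
    refine ⟨k.val - 1, by omega, ?_⟩
    rw [Fin.val_sub_one_of_ne_zero]
    intro h0
    rw [h0] at h
    simp at h

/-- The labeling lemma with data given by functions on natural numbers. -/
lemma core_nat (a b : ℕ) (ha : 3 ≤ a) (hb : 3 ≤ b) (c d : ℕ → ℕ) (M : ℕ → ℕ → ℕ) (z : ℕ)
    (hz : z < a) (hcz : c z = 0)
    (hc : ∀ i < a, ∀ i' < a, c i = c i' → i = i')
    (hd : ∀ i < b, ∀ i' < b, d i = d i' → i = i')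
    (hM : ∀ i < a, ∀ j < b, ∀ i' < a, ∀ j' < b, M i j = M i' j' → i = i' ∧ j = j')
    (hcd : ∀ i < a, ∀ j < b, c i ≠ d j)
    (hcM : ∀ k < a, ∀ i < a, ∀ j < b, c k ≠ M i j)
    (hdM : ∀ k < b, ∀ i < a, ∀ j < b, d k ≠ M i j)
    (hcl : ∀ i < a, c i < a + (b + a * b))
    (hdl : ∀ i < b, d i < a + (b + a * b))
    (hMl : ∀ i < a, ∀ j < b, M i j < a + (b + a * b))
    (R K : ℕ → ℕ)
    (hR0 : c 0 + c (a - 1) + ∑ j ∈ range b, M 0 j = R 0)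
    (hR : ∀ i, i + 1 < a → c (i + 1) + c i + ∑ j ∈ range b, M (i + 1) j = R (i + 1))
    (hK0 : d 0 + d (b - 1) + ∑ i ∈ range a, M i 0 = K 0)
    (hK : ∀ j, j + 1 < b → d (j + 1) + d j + ∑ i ∈ range a, M i (j + 1) = K (j + 1))
    (hRR0 : R (a - 1) ≠ R 0) (hRR : ∀ i, i + 1 < a → R i ≠ R (i + 1))
    (hKK0 : K (b - 1) ≠ K 0) (hKK : ∀ i, i + 1 < b → K i ≠ K (i + 1))
    (hRK : ∀ i < a, ∀ j < b, R i ≠ K j)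
    (S : Finset ℕ) (hS : S.card ≤ 5) (hRS : ∀ i < a, R i ∈ S) (hKS : ∀ j < b, K j ∈ S)
    (e : Sym2 (Fin a)) (he : e ∈ (cycleGraph a).edgeSet) :
    ∃ f, IsLocalAntimagic ((joinG (cycleGraph a) (cycleGraph b)).deleteEdges
      {Sym2.map Sum.inl e}) f ∧
      colorCount ((joinG (cycleGraph a) (cycleGraph b)).deleteEdges
      {Sym2.map Sum.inl e}) f ≤ 5 := by
  obtain ⟨p, rfl⟩ : ∃ p, a = p + 3 := ⟨a - 3, by omega⟩
  obtain ⟨q, rfl⟩ : ∃ q, b = q + 3 := ⟨b - 3, by omega⟩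
  obtain ⟨u, rfl⟩ : ∃ u, e = s(u, u + 1) := by
    induction e using Sym2.ind with
    | _ x y =>
      rw [SimpleGraph.mem_edgeSet, cycleGraph_adj] at he
      rcases he with h | h
      · exact ⟨y, by rw [← h]; simp⟩
      · exact ⟨x, by rw [← h]; simp⟩
  set z' : Fin (p + 3) := ⟨z, hz⟩ with hz'
  let g : Fin (p + 3) → Fin (p + 3) := fun i => i + (z' - u)
  have gsub : ∀ i, g (i - 1) = g i - 1 := fun i => by simp only [g]; abel
  have gadd : ∀ i, g i = g (i + 1) - 1 := fun i => by simp only [g]; abel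
  have ginj : ∀ i i', (g i).val = (g i').val → i = i' := by
    intro i i' h
    exact add_right_cancel (Fin.ext h : g i = g i')
  have hsum : ∀ j : ℕ, ∑ i, M (g i).val j = ∑ i ∈ range (p + 3), M i j := by
    intro j
    rw [← Fin.sum_univ_eq_sum_range (fun i => M i j)]
    exact Equiv.sum_comp (Equiv.addRight (z' - u)) (fun i : Fin (p + 3) => M i.val j)
  apply core_labeling p q (fun i => c (g i).val) (fun j => d j.val)
    (fun i j => M (g i).val j.val) u ?_ ?_ ?_ (fun i => R (g i).val) (fun j => K j.val)
    ?_ ?_ ?_ ?_ ?_ S hS ?_ ?_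
  · simp [g, hz', hcz]
  · rintro (i | j | ⟨i, j⟩) (i' | j' | ⟨i', j'⟩) h <;>
      simp only [Sum.elim_inl, Sum.elim_inr] at h
    · rw [ginj _ _ (hc _ (g i).2 _ (g i').2 h)]
    · exact (hcd _ (g i).2 _ j'.2 h).elim
    · exact (hcM _ (g i).2 _ (g i').2 _ j'.2 h).elim
    · exact (hcd _ (g i').2 _ j.2 h.symm).elim
    · rw [Fin.ext (hd _ j.2 _ j'.2 h)]
    · exact (hdM _ j.2 _ (g i').2 _ j'.2 h).elim
    · exact (hcM _ (g i').2 _ (g i).2 _ j.2 h.symm).elim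
    · exact (hdM _ j'.2 _ (g i).2 _ j.2 h.symm).elim
    · obtain ⟨h1, h2⟩ := hM _ (g i).2 _ j.2 _ (g i').2 _ j'.2 h
      rw [ginj _ _ h1, Fin.ext h2]
  · rintro (i | j | ⟨i, j⟩)
    · exact hcl _ (g i).2
    · exact hdl _ j.2
    · exact hMl _ (g i).2 _ j.2
  · intro i
    simp only [gsub]
    rw [Fin.sum_univ_eq_sum_range (fun j => M (g i).val j)]
    rcases fin_val_sub_one p (g i) with ⟨h1, h2⟩ | ⟨k, h1, h2⟩
    · rw [h1, h2]; exact hR0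
    · rw [h1, h2]; exact hR k (by have := (g i).2; omega)
  · intro j
    simp only [hsum]
    rcases fin_val_sub_one q j with ⟨h1, h2⟩ | ⟨k, h1, h2⟩
    · rw [h1, h2]; exact hK0
    · rw [h1, h2]; exact hK k (by have := j.2; omega)
  · intro i
    rw [gadd i]
    rcases fin_val_sub_one p (g (i + 1)) with ⟨h1, h2⟩ | ⟨k, h1, h2⟩
    · rw [h1, h2]; exact hRR0
    · rw [h1, h2]; exact hRR k (by have := (g (i + 1)).2; omega)
  · intro j
    have hj : j = (j + 1) - 1 := by simp
    rcases fin_val_sub_one q (j + 1) with ⟨h1, h2⟩ | ⟨k, h1, h2⟩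
    · rw [← hj] at h2; rw [h1, h2]; exact hKK0
    · rw [← hj] at h2; rw [h1, h2]; exact hKK k (by have := (j + 1).2; omega)
  · intro i j; exact hRK _ (g i).2 _ j.2
  · intro i; exact hRS _ (g i).2
  · intro j; exact hKS _ j.2

lemma sum_range_pairs (m : ℕ) (F : ℕ → ℕ) :
    ∑ i ∈ range (2 * m), F i = ∑ k ∈ range m, (F (2 * k) + F (2 * k + 1)) := by
  induction m with
  | zero => simp
  | succ n ih =>
    rw [Finset.sum_range_succ, ← ih, show 2 * (n + 1) = 2 * n + 1 + 1 by ring,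
      Finset.sum_range_succ, Finset.sum_range_succ]
    ring

lemma sum_range_pairs_odd (h : ℕ) (F : ℕ → ℕ) :
    ∑ j ∈ range (2 * h + 1), F j
      = F 0 + ∑ t ∈ range h, (F (2 * t + 1) + F (2 * t + 2)) := by
  rw [Finset.sum_range_succ', sum_range_pairs, add_comm]

/-- The labels of the edges between the two cycles. -/
def entM (m h : ℕ) (w : ℕ → ℕ) (i j : ℕ) : ℕ :=
  if j = 0 then w i else
    if j % 2 = 1 then
      (if i % 2 = 0 then (4 * m + 2 * h + 1) + 2 * ((i / 2) * h + (j - 1) / 2)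
        else (4 * m + 2 * h + 1) + 4 * (m * h) - 1 - 2 * ((i / 2) * h + (j - 1) / 2))
    else
      (if i % 2 = 0 then (4 * m + 2 * h + 1) + 4 * (m * h) - 2 - 2 * ((i / 2) * h + (j - 1) / 2)
        else (4 * m + 2 * h + 1) + 2 * ((i / 2) * h + (j - 1) / 2) + 1)

/-- The labels of the odd cycle. -/
def cycD (h lo hi j : ℕ) : ℕ :=
  if j % 2 = 0 then lo + j / 2 else hi + h - 1 - j / 2

lemma kap_lt (m h k t : ℕ) (hk : k < m) (ht : t < h) : k * h + t < m * h := by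
  have : (k + 1) * h ≤ m * h := Nat.mul_le_mul_right h hk
  linarith [add_mul k 1 h]

lemma kap_inj (h k t k' t' : ℕ) (ht : t < h) (ht' : t' < h) (e : k * h + t = k' * h + t') :
    k = k' ∧ t = t' := by
  have hk : k = k' := by
    rcases lt_trichotomy k k' with hlt | heq | hlt
    · have : (k + 1) * h ≤ k' * h := Nat.mul_le_mul_right h hlt
      linarith [add_mul k 1 h]
    · exact heq
    · have : (k' + 1) * h ≤ k * h := Nat.mul_le_mul_right h hlt
      linarith [add_mul k' 1 h]
  subst hk
  exact ⟨rfl, by omega⟩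

lemma entM_ge (m h : ℕ) (w : ℕ → ℕ) (i j : ℕ) (hi : i < 2 * m) (hj : j < 2 * h + 1)
    (hj0 : j ≠ 0) : 4 * m + 2 * h + 1 ≤ entM m h w i j := by
  have := kap_lt m h (i / 2) ((j - 1) / 2) (by omega) (by omega)
  unfold entM
  split_ifs <;> omega

lemma entM_lt (m h : ℕ) (w : ℕ → ℕ) (i j : ℕ) (hi : i < 2 * m) (hj : j < 2 * h + 1)
    (hj0 : j ≠ 0) : entM m h w i j < 4 * m + 2 * h + 1 + 4 * (m * h) := by
  have := kap_lt m h (i / 2) ((j - 1) / 2) (by omega) (by omega)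
  unfold entM
  split_ifs <;> omega

lemma entM_inj (m h : ℕ) (w : ℕ → ℕ) (i j i' j' : ℕ) (hi : i < 2 * m) (hj : j < 2 * h + 1)
    (hj0 : j ≠ 0) (hi' : i' < 2 * m) (hj' : j' < 2 * h + 1) (hj0' : j' ≠ 0)
    (e : entM m h w i j = entM m h w i' j') : i = i' ∧ j = j' := by
  have h1 := kap_lt m h (i / 2) ((j - 1) / 2) (by omega) (by omega)
  have h2 := kap_lt m h (i' / 2) ((j' - 1) / 2) (by omega) (by omega)
  have h3 := kap_inj h (i / 2) ((j - 1) / 2) (i' / 2) ((j' - 1) / 2) (by omega) (by omega)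
  unfold entM at e
  rw [if_neg hj0, if_neg hj0'] at e
  have key : i % 2 = i' % 2 ∧ j % 2 = j' % 2 ∧
      (i / 2) * h + (j - 1) / 2 = (i' / 2) * h + (j' - 1) / 2 := by
    split_ifs at e <;> omega
  obtain ⟨h4, h5⟩ := h3 key.2.2
  omega

lemma entM_row (m h : ℕ) (w : ℕ → ℕ) (i : ℕ) (hi : i < 2 * m) :
    ∑ j ∈ range (2 * h + 1), entM m h w i j + h
      = w i + h * (8 * m + 4 * h + 4 * (m * h) + 1) + (if i % 2 = 0 then 0 else 2 * h) := by
  rw [sum_range_pairs_odd]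
  have : ∀ t ∈ range h, entM m h w i (2 * t + 1) + entM m h w i (2 * t + 2)
      = 8 * m + 4 * h + 4 * (m * h) + (if i % 2 = 0 then 0 else 2) := by
    intro t ht
    have ht := Finset.mem_range.1 ht
    have h1 := kap_lt m h (i / 2) t (by omega) ht
    unfold entM
    rw [show (2 * t + 1 - 1) / 2 = t by omega, show (2 * t + 2 - 1) / 2 = t by omega]
    have e1 : ¬ (2 * t + 1 = 0) := by omega
    have e2 : ¬ (2 * t + 2 = 0) := by omega
    have e3 : (2 * t + 1) % 2 = 1 := by omega
    have e4 : ¬ ((2 * t + 2) % 2 = 1) := by omega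
    simp only [if_neg e1, if_neg e2, if_pos e3, if_neg e4]
    split_ifs <;> omega
  rw [Finset.sum_congr rfl this, Finset.sum_const, Finset.card_range, smul_eq_mul]
  have : entM m h w i 0 = w i := by simp [entM]
  rw [this]
  split_ifs <;> ring

lemma entM_col (m h : ℕ) (w : ℕ → ℕ) (j : ℕ) (hj0 : j ≠ 0) (hj : j < 2 * h + 1) :
    ∑ i ∈ range (2 * m), entM m h w i j = m * (8 * m + 4 * h + 4 * (m * h) + 1) := by
  rw [sum_range_pairs]
  have : ∀ k ∈ range m, entM m h w (2 * k) j + entM m h w (2 * k + 1) j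
      = 8 * m + 4 * h + 4 * (m * h) + 1 := by
    intro k hk
    have hk := Finset.mem_range.1 hk
    have h1 := kap_lt m h k ((j - 1) / 2) (by omega) (by omega)
    unfold entM
    rw [show (2 * k) / 2 = k by omega, show (2 * k + 1) / 2 = k by omega,
      if_neg hj0, if_neg hj0]
    split_ifs <;> omega
  rw [Finset.sum_congr rfl this, Finset.sum_const, Finset.card_range, smul_eq_mul]



set_option maxHeartbeats 2000000 in
/-- From a suitable labeling of the wheel to the labeling of the join. -/
lemma from_wheel (m h : ℕ) (hm : 2 ≤ m) (hh : 1 ≤ h) (c w : ℕ → ℕ) (lo hi x y om T X0 X1 C : ℕ)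
    (hc1 : c 1 = 0)
    (hc : ∀ i < 2 * m, ∀ i' < 2 * m, c i = c i' → i = i')
    (hw : ∀ i < 2 * m, ∀ i' < 2 * m, w i = w i' → i = i')
    (hcw : ∀ i < 2 * m, ∀ i' < 2 * m, c i ≠ w i')
    (hcl : ∀ i < 2 * m, c i < 4 * m + 2 * h + 1)
    (hwl : ∀ i < 2 * m, w i < 4 * m + 2 * h + 1)
    (hclo : ∀ i < 2 * m, c i < lo ∨ lo + h < c i)
    (hchi : ∀ i < 2 * m, c i < hi ∨ hi + h ≤ c i)
    (hwlo : ∀ i < 2 * m, w i < lo ∨ lo + h < w i)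
    (hwhi : ∀ i < 2 * m, w i < hi ∨ hi + h ≤ w i)
    (hlohi : lo + h < hi ∨ hi + h ≤ lo)
    (hlo : lo + h < 4 * m + 2 * h + 1) (hhi : hi + h ≤ 4 * m + 2 * h + 1)
    (hrow0 : c 0 + c (2 * m - 1) + w 0 = x)
    (hrow : ∀ i, i + 1 < 2 * m →
      c (i + 1) + c i + w (i + 1) = if (i + 1) % 2 = 0 then x else y)
    (hom : ∑ i ∈ range (2 * m), w i = om)
    (hT : T = 8 * m + 4 * h + 4 * (m * h) + 1)
    (hX0 : X0 + h = x + h * T) (hX1 : X1 = y + h * T + h) (hC : C + 1 = m * T + lo + hi + h)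
    (hne : X0 ≠ X1) (h1 : X0 ≠ C) (h2 : X0 ≠ C + 1) (h3 : X1 ≠ C) (h4 : X1 ≠ C + 1)
    (h5 : om + 2 * lo + h < C) (h6 : om + 2 * lo + h ≠ X0) (h7 : om + 2 * lo + h ≠ X1)
    (e : Sym2 (Fin (2 * m))) (he : e ∈ (cycleGraph (2 * m)).edgeSet) :
    ∃ f, IsLocalAntimagic ((joinG (cycleGraph (2 * m)) (cycleGraph (2 * h + 1))).deleteEdges
      {Sym2.map Sum.inl e}) f ∧
      colorCount ((joinG (cycleGraph (2 * m)) (cycleGraph (2 * h + 1))).deleteEdges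
      {Sym2.map Sum.inl e}) f ≤ 5 := by
  have hQ : 2 * m + (2 * h + 1 + 2 * m * (2 * h + 1)) = 4 * m + 2 * h + 1 + 4 * (m * h) := by ring
  have hent0 : ∀ i, entM m h w i 0 = w i := fun i => by simp [entM]
  have hdr : ∀ j < 2 * h + 1, (lo ≤ cycD h lo hi j ∧ cycD h lo hi j ≤ lo + h) ∨
      (hi ≤ cycD h lo hi j ∧ cycD h lo hi j < hi + h) := by
    intro j hj
    unfold cycD
    split_ifs <;> omega
  have hd0 : cycD h lo hi 0 = lo := by simp [cycD]
  have hdl : cycD h lo hi (2 * h) = lo + h := by simp [cycD]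
  refine core_nat (2 * m) (2 * h + 1) (by omega) (by omega) c (cycD h lo hi) (entM m h w) 1
    (by omega) hc1 hc ?_ ?_ ?_ ?_ ?_ ?_ ?_ ?_
    (fun i => if i % 2 = 0 then X0 else X1)
    (fun j => if j = 0 then om + 2 * lo + h else if j % 2 = 1 then C else C + 1)
    ?_ ?_ ?_ ?_ ?_ ?_ ?_ ?_ ?_ {X0, X1, om + 2 * lo + h, C, C + 1} ?_ ?_ ?_ e he
  · intro i hi' j hj hij
    clear hX0 hX1 hC hne h1 h2 h3 h4 h5 h6 h7 hT hom hdr hd0 hdl hQ hlo hhi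
    unfold cycD at hij
    split_ifs at hij <;> omega
  · intro i hi j hj i' hi' j' hj' hij
    by_cases hj0 : j = 0
    · by_cases hj0' : j' = 0
      · subst hj0 hj0'
        rw [hent0, hent0] at hij
        exact ⟨hw _ hi _ hi' hij, rfl⟩
      · subst hj0
        have a1 := entM_ge m h w i' j' hi' hj' hj0'
        have a2 := hwl i hi
        rw [hent0] at hij
        omega
    · by_cases hj0' : j' = 0
      · subst hj0'
        have a1 := entM_ge m h w i j hi hj hj0
        have a2 := hwl i' hi'
        rw [hent0] at hij
        omega
      · exact entM_inj m h w i j i' j' hi hj hj0 hi' hj' hj0' hij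
  · intro i hi' j hj
    have := hdr j hj
    have := hclo i hi'
    have := hchi i hi'
    clear hX0 hX1 hC hne h1 h2 h3 h4 h5 h6 h7 hT hom hdr hd0 hdl hQ hlo hhi hlohi
    omega
  · intro k hk i hi' j hj
    by_cases hj0 : j = 0
    · subst hj0
      rw [hent0]
      exact hcw k hk i hi'
    · have := entM_ge m h w i j hi' hj hj0
      have := hcl k hk
      omega
  · intro k hk i hi' j hj
    have := hdr k hk
    by_cases hj0 : j = 0
    · subst hj0
      rw [hent0]
      have := hwlo i hi'
      have := hwhi i hi'
      clear hX0 hX1 hC hne h1 h2 h3 h4 h5 h6 h7 hT hom hdr hd0 hdl hQ hlo hhi hlohi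
      omega
    · clear hX0 hX1 hC hne h1 h2 h3 h4 h5 h6 h7 hT hom hdr hd0 hdl hQ hlohi
      have := entM_ge m h w i j hi' hj hj0
      omega
  · intro i hi'
    have := hcl i hi'
    omega
  · intro i hi'
    have := hdr i hi'
    clear hX0 hX1 hC hne h1 h2 h3 h4 h5 h6 h7 hT hom hdr hd0 hdl hlohi
    omega
  · intro i hi' j hj
    by_cases hj0 : j = 0
    · subst hj0
      rw [hent0]
      have := hwl i hi'
      omega
    · have := entM_lt m h w i j hi' hj hj0
      omega
  · have := entM_row m h w 0 (by omega)
    rw [← hT] at this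
    simp only [Nat.zero_mod, if_true] at this ⊢
    omega
  · intro i hi'
    have := entM_row m h w (i + 1) hi'
    have a2 := hrow i hi'
    rw [← hT] at this
    split_ifs at * <;> omega
  · simp only [hent0, hom, if_true, Nat.add_sub_cancel, hd0, hdl]
    omega
  · intro j hj
    rw [entM_col m h w (j + 1) (by omega) hj, ← hT]
    simp only [cycD]
    rw [if_neg (by omega : ¬ j + 1 = 0)]
    split_ifs <;> omega
  · rw [if_neg (by omega), if_pos (by omega)]
    exact hne.symm
  · intro i hi'
    split_ifs <;> omega
  · split_ifs <;> omega
  · intro i hi'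
    rw [if_neg (Nat.succ_ne_zero i)]
    split_ifs <;> omega
  · intro i hi' j hj
    split_ifs <;> omega
  · exact Finset.card_le_five
  · intro i hi'
    split_ifs <;> simp
  · intro j hj
    split_ifs <;> simp

lemma sum_le_mul (n B : ℕ) (w : ℕ → ℕ) (hw : ∀ i < n, w i ≤ B) :
    ∑ i ∈ range n, w i ≤ n * B := by
  have := Finset.sum_le_card_nsmul (range n) w B (fun i hi => hw i (Finset.mem_range.1 hi))
  simpa using this

lemma sum_rows (N x : ℕ) (c w : ℕ → ℕ)
    (hrow : ∀ i, i + 1 < N → c (i + 1) + c i + w (i + 1) = x) (n : ℕ) (hn : n < N) :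
    ∃ q, ∑ i ∈ range n, w (i + 1) + 2 * q + c n = n * x + c 0 := by
  induction n with
  | zero => exact ⟨0, by simp⟩
  | succ n ih =>
    obtain ⟨q, hq⟩ := ih (by omega)
    refine ⟨q + c n, ?_⟩
    have := hrow n hn
    rw [Finset.sum_range_succ, add_mul, one_mul]
    omega

/-- Edge labels of the even cycle, `m` even. -/
def evC (m h i : ℕ) : ℕ :=
  if i % 2 = 0 then m + h + 1 + i / 2
  else if i / 2 < m / 2 then i / 2 else i / 2 + h + 1

/-- Spoke labels, `m` even. -/
def evW (m h i : ℕ) : ℕ :=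
  if i = 0 then 3 * m + h else if i ≤ m then 4 * m + 2 * h + 1 - i else 4 * m + h - i

set_option maxHeartbeats 1000000 in
lemma exists_even (m s h : ℕ) (hms : m = 2 * s) (hs : 1 ≤ s) (hh : 1 ≤ h)
    (e : Sym2 (Fin (2 * m))) (he : e ∈ (cycleGraph (2 * m)).edgeSet) :
    ∃ f, IsLocalAntimagic ((joinG (cycleGraph (2 * m)) (cycleGraph (2 * h + 1))).deleteEdges
      {Sym2.map Sum.inl e}) f ∧
      colorCount ((joinG (cycleGraph (2 * m)) (cycleGraph (2 * h + 1))).deleteEdges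
      {Sym2.map Sum.inl e}) f ≤ 5 := by
  have hdiv : m / 2 = s := by omega
  have hrow0 : evC m h 0 + evC m h (2 * m - 1) + evW m h 0 = 5 * m + 3 * h + 1 := by
    unfold evC evW
    rw [hdiv]
    split_ifs <;> omega
  have hrow : ∀ i, i + 1 < 2 * m →
      evC m h (i + 1) + evC m h i + evW m h (i + 1) = 5 * m + 3 * h + 1 := by
    intro i hi
    unfold evC evW
    rw [hdiv]
    have : ¬ (i + 1 = 0) := by omega
    rw [if_neg this]
    split_ifs <;> omega
  have hwl : ∀ i < 2 * m, evW m h i ≤ 4 * m + 2 * h := by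
    intro i hi
    unfold evW
    split_ifs <;> omega
  obtain ⟨T, hT⟩ : ∃ T, T = 8 * m + 4 * h + 4 * (m * h) + 1 := ⟨_, rfl⟩
  obtain ⟨om, hom⟩ : ∃ om, ∑ i ∈ range (2 * m), evW m h i = om := ⟨_, rfl⟩
  have hbound := sum_le_mul (2 * m) (4 * m + 2 * h) (evW m h) hwl
  rw [hom] at hbound
  have hpar : om % 2 = 0 := by
    obtain ⟨q, hq⟩ := sum_rows (2 * m) _ (evC m h) (evW m h) hrow (2 * m - 1) (by omega)
    have h2 : 2 * m = (2 * m - 1) + 1 := by omega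
    rw [h2, Finset.sum_range_succ'] at hom
    have h3 : (2 * m - 1) * (5 * m + 3 * h + 1) + (5 * m + 3 * h + 1)
        = 2 * (m * (5 * m + 3 * h + 1)) := by
      have : (2 * m - 1 + 1) * (5 * m + 3 * h + 1) = 2 * (m * (5 * m + 3 * h + 1)) := by
        rw [← h2]; ring
      rw [← this, add_mul, one_mul]
    omega
  have hTm : m * T = 8 * (m * m) + 4 * (m * h) + 4 * (m * (m * h)) + m := by rw [hT]; ring
  have hTh : h * T = 2 * (h * (4 * m + 2 * h + 2 * (m * h))) + h := by rw [hT]; ring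
  have hb2 : om ≤ 8 * (m * m) + 4 * (m * h) := by
    calc om ≤ _ := hbound
      _ = _ := by ring
  have hmh : m ≤ m * h := Nat.le_mul_of_pos_right m hh
  have hmh2 : h ≤ m * h := Nat.le_mul_of_pos_left h (by omega)
  have htri : (h = m ∧ h * T = m * T) ∨ h * T + T ≤ m * T ∨ m * T + T ≤ h * T := by
    rcases lt_trichotomy h m with hlt | heq | hlt
    · right; left
      have : (h + 1) * T ≤ m * T := Nat.mul_le_mul_right T hlt
      linarith [add_mul h 1 T]
    · left; exact ⟨heq, by rw [heq]⟩
    · right; right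
      have : (m + 1) * T ≤ h * T := Nat.mul_le_mul_right T hlt
      linarith [add_mul m 1 T]
  have hhT : h ≤ h * T := Nat.le_mul_of_pos_right h (by omega)
  have hmT : m ≤ m * T := Nat.le_mul_of_pos_right m (by omega)
  refine from_wheel m h (by omega) hh (evC m h) (evW m h) s (3 * m + h + 1)
    (5 * m + 3 * h + 1) (5 * m + 3 * h + 1) om T (5 * m + 3 * h + 1 + h * T - h)
    (5 * m + 3 * h + 1 + h * T + h) (m * T + s + (3 * m + h + 1) + h - 1)
    ?_ ?_ ?_ ?_ ?_ ?_ ?_ ?_ ?_ ?_ ?_ ?_ ?_ hrow0 ?_ hom hT ?_ rfl ?_ ?_ ?_ ?_ ?_ ?_ ?_ ?_ ?_ e he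
  · unfold evC; rw [hdiv]; simp; omega
  · clear hom hbound hpar hTm hTh hb2 hmh hmh2 htri hhT hmT hrow0 hT
    intro i hi i' hi' hij
    unfold evC at hij
    rw [hdiv] at hij
    split_ifs at hij <;> omega
  · clear hom hbound hpar hTm hTh hb2 hmh hmh2 htri hhT hmT hrow0 hT
    intro i hi i' hi' hij
    unfold evW at hij
    split_ifs at hij <;> omega
  · clear hom hbound hpar hTm hTh hb2 hmh hmh2 htri hhT hmT hrow0 hT
    intro i hi i' hi'
    unfold evW evC
    rw [hdiv]
    split_ifs <;> omega
  · clear hom hbound hpar hTm hTh hb2 hmh hmh2 htri hhT hmT hrow0 hT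
    intro i hi
    unfold evC
    rw [hdiv]
    split_ifs <;> omega
  · intro i hi
    have := hwl i hi
    omega
  · clear hom hbound hpar hTm hTh hb2 hmh hmh2 htri hhT hmT hrow0 hT
    intro i hi
    unfold evC
    rw [hdiv]
    split_ifs <;> omega
  · clear hom hbound hpar hTm hTh hb2 hmh hmh2 htri hhT hmT hrow0 hT
    intro i hi
    unfold evC
    rw [hdiv]
    split_ifs <;> omega
  · clear hom hbound hpar hTm hTh hb2 hmh hmh2 htri hhT hmT hrow0 hT
    intro i hi
    unfold evW
    split_ifs <;> omega
  · clear hom hbound hpar hTm hTh hb2 hmh hmh2 htri hhT hmT hrow0 hT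
    intro i hi
    unfold evW
    split_ifs <;> omega
  · omega
  · omega
  · omega
  · intro i hi
    rw [hrow i hi]
    split_ifs <;> rfl
  · omega
  · omega
  · omega
  · clear hom hbound hpar hTm hTh hb2
    omega
  · clear hom hbound hpar hTm hTh hb2
    omega
  · clear hom hbound hpar hTm hTh hb2
    omega
  · clear hom hbound hpar hTm hTh hb2
    omega
  · clear hom hbound hpar hTh htri
    omega
  · clear hom hbound hTm hb2 htri hT
    omega
  · clear hom hbound hTm hb2 htri hT
    omega

/-- Edge labels of the even cycle, `m = 2 * r + 1`. -/
def odC (r i : ℕ) : ℕ :=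
  if i % 2 = 1 then i / 2
  else if (i / 2) % 2 = 0 then 3 * r + 1 - (i / 2) / 2 else 4 * r + 1 - (i / 2) / 2

/-- Spoke labels, `m = 2 * r + 1`. -/
def odW (r i : ℕ) : ℕ :=
  if i = 0 then 4 * r + 2
  else if i % 2 = 0 then
    (if (i / 2) % 2 = 0 then 6 * r + 3 - (i / 2) / 2 else 5 * r + 2 - (i / 2) / 2)
  else
    (if (i / 2) % 2 = 0 then 8 * r + 4 - 1 - (i / 2) / 2 else 7 * r + 2 - (i / 2) / 2)

lemma odC_lt (r i : ℕ) (hi : i < 2 * (2 * r + 1)) : odC r i ≤ 4 * r + 1 := by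
  unfold odC
  split_ifs <;> omega

lemma odC_inj (r i i' : ℕ) (hi : i < 2 * (2 * r + 1)) (hi' : i' < 2 * (2 * r + 1))
    (hij : odC r i = odC r i') : i = i' := by
  unfold odC at hij
  split_ifs at hij <;> omega

lemma odW_range (r i : ℕ) (hr : 1 ≤ r) (hi : i < 2 * (2 * r + 1)) :
    4 * r + 2 ≤ odW r i ∧ odW r i ≤ 8 * r + 3 := by
  unfold odW
  split_ifs <;> omega

lemma odW_inj (r i i' : ℕ) (hi : i < 2 * (2 * r + 1)) (hi' : i' < 2 * (2 * r + 1))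
    (hij : odW r i = odW r i') : i = i' := by
  unfold odW at hij
  split_ifs at hij <;> omega

lemma odRow0 (r : ℕ) : odC r 0 + odC r (2 * (2 * r + 1) - 1) + odW r 0 = 9 * r + 3 := by
  have h1 : (2 * (2 * r + 1) - 1) % 2 = 1 := by omega
  have h2 : (2 * (2 * r + 1) - 1) / 2 = 2 * r := by omega
  unfold odC odW
  rw [if_pos h1, h2]
  simp
  omega

lemma odRow (r i : ℕ) (hi : i + 1 < 2 * (2 * r + 1)) :
    odC r (i + 1) + odC r i + odW r (i + 1) = if (i + 1) % 2 = 0 then 9 * r + 3 else 11 * r + 4 := by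
  unfold odC odW
  rw [if_neg (Nat.succ_ne_zero i)]
  split_ifs <;> omega

set_option maxHeartbeats 1000000 in
lemma exists_odd (m r h : ℕ) (hmr : m = 2 * r + 1) (hr : 1 ≤ r) (hh : 1 ≤ h)
    (e : Sym2 (Fin (2 * m))) (he : e ∈ (cycleGraph (2 * m)).edgeSet) :
    ∃ f, IsLocalAntimagic ((joinG (cycleGraph (2 * m)) (cycleGraph (2 * h + 1))).deleteEdges
      {Sym2.map Sum.inl e}) f ∧
      colorCount ((joinG (cycleGraph (2 * m)) (cycleGraph (2 * h + 1))).deleteEdges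
      {Sym2.map Sum.inl e}) f ≤ 5 := by
  have hmr2 : 2 * m = 2 * (2 * r + 1) := by omega
  obtain ⟨T, hT⟩ : ∃ T, T = 8 * m + 4 * h + 4 * (m * h) + 1 := ⟨_, rfl⟩
  obtain ⟨om, hom⟩ : ∃ om, ∑ i ∈ range (2 * m), odW r i = om := ⟨_, rfl⟩
  have hwr : ∀ i < 2 * m, 2 * m ≤ odW r i ∧ odW r i + 1 ≤ 4 * m := by
    intro i hi
    have := odW_range r i hr (by omega)
    omega
  have hcr : ∀ i < 2 * m, odC r i < 2 * m := by
    intro i hi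
    have := odC_lt r i (by omega)
    omega
  have hbound := sum_le_mul (2 * m) (4 * m) (odW r) (fun i hi => by have := hwr i hi; omega)
  rw [hom] at hbound
  have hTm : m * T = 8 * (m * m) + 4 * (m * h) + 4 * (m * (m * h)) + m := by rw [hT]; ring
  have hb2 : om ≤ 8 * (m * m) := by
    calc om ≤ _ := hbound
      _ = _ := by ring
  have hmh : m ≤ m * h := Nat.le_mul_of_pos_right m hh
  have hmh2 : h ≤ m * h := Nat.le_mul_of_pos_left h (by omega)
  have htri : (h = m ∧ h * T = m * T) ∨ h * T + T ≤ m * T ∨ m * T + T ≤ h * T := by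
    rcases lt_trichotomy h m with hlt | heq | hlt
    · right; left
      have : (h + 1) * T ≤ m * T := Nat.mul_le_mul_right T hlt
      linarith [add_mul h 1 T]
    · left; exact ⟨heq, by rw [heq]⟩
    · right; right
      have : (m + 1) * T ≤ h * T := Nat.mul_le_mul_right T hlt
      linarith [add_mul m 1 T]
  have hhT : h ≤ h * T := Nat.le_mul_of_pos_right h (by omega)
  have hmT : m ≤ m * T := Nat.le_mul_of_pos_right m (by omega)
  obtain ⟨lo, hi, hlh, h6, h7⟩ : ∃ lo hi, ((lo = 4 * m ∧ hi = 4 * m + h + 1) ∨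
      (lo = 4 * m + h ∧ hi = 4 * m)) ∧ om + 2 * lo + h ≠ 9 * r + 3 + h * T - h ∧
      om + 2 * lo + h ≠ 11 * r + 4 + h * T + h := by
    clear hbound hTm hb2 htri hmT
    by_cases hgood : om + 2 * (4 * m) + h ≠ 9 * r + 3 + h * T - h ∧
      om + 2 * (4 * m) + h ≠ 11 * r + 4 + h * T + h
    · exact ⟨_, _, Or.inl ⟨rfl, rfl⟩, hgood⟩
    · refine ⟨_, _, Or.inr ⟨rfl, rfl⟩, ?_⟩
      omega
  refine from_wheel m h (by omega) hh (odC r) (odW r) lo hi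
    (9 * r + 3) (11 * r + 4) om T (9 * r + 3 + h * T - h)
    (11 * r + 4 + h * T + h) (m * T + lo + hi + h - 1)
    ?_ ?_ ?_ ?_ ?_ ?_ ?_ ?_ ?_ ?_ ?_ ?_ ?_ ?_ ?_ hom hT ?_ rfl ?_ ?_ ?_ ?_ ?_ ?_ ?_ h6 h7 e he
  · simp [odC]
  · intro i hi i' hi' hij
    exact odC_inj r i i' (by omega) (by omega) hij
  · intro i hi i' hi' hij
    exact odW_inj r i i' (by omega) (by omega) hij
  · clear hom hbound hTm hb2 hmh hmh2 htri hhT hmT hT h6 h7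
    intro i hi i' hi'
    have := hcr i hi
    have := hwr i' hi'
    omega
  · clear hom hbound hTm hb2 hmh hmh2 htri hhT hmT hT h6 h7
    intro i hi
    have := hcr i hi
    omega
  · clear hom hbound hTm hb2 hmh hmh2 htri hhT hmT hT h6 h7
    intro i hi
    have := hwr i hi
    omega
  · clear hom hbound hTm hb2 hmh hmh2 htri hhT hmT hT h6 h7
    intro i hi
    have := hcr i hi
    omega
  · clear hom hbound hTm hb2 hmh hmh2 htri hhT hmT hT h6 h7
    intro i hi
    have := hcr i hi
    omega
  · clear hom hbound hTm hb2 hmh hmh2 htri hhT hmT hT h6 h7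
    intro i hi
    have := hwr i hi
    omega
  · clear hom hbound hTm hb2 hmh hmh2 htri hhT hmT hT h6 h7
    intro i hi
    have := hwr i hi
    omega
  · clear hom hbound hTm hb2 hmh hmh2 htri hhT hmT hT h6 h7
    omega
  · clear hom hbound hTm hb2 hmh hmh2 htri hhT hmT hT h6 h7
    omega
  · clear hom hbound hTm hb2 hmh hmh2 htri hhT hmT hT h6 h7
    omega
  · rw [hmr2]
    exact odRow0 r
  · intro i hi
    exact odRow r i (by omega)
  · clear hom hbound hTm hb2 htri h6 h7
    omega
  · clear hom hbound hTm hb2 htri h6 h7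
    omega
  · clear hom hbound hTm hb2 htri h6 h7
    omega
  · clear hom hbound hTm hb2 h6 h7
    omega
  · clear hom hbound hTm hb2 h6 h7
    omega
  · clear hom hbound hTm hb2 h6 h7
    omega
  · clear hom hbound hTm hb2 h6 h7
    omega
  · clear hom hbound htri h6 h7
    omega

lemma exists_labeling (m h : ℕ) (hm : 2 ≤ m) (hh : 1 ≤ h)
    (e : Sym2 (Fin (2 * m))) (he : e ∈ (cycleGraph (2 * m)).edgeSet) :
    ∃ f, IsLocalAntimagic ((joinG (cycleGraph (2 * m)) (cycleGraph (2 * h + 1))).deleteEdges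
      {Sym2.map Sum.inl e}) f ∧
      colorCount ((joinG (cycleGraph (2 * m)) (cycleGraph (2 * h + 1))).deleteEdges
      {Sym2.map Sum.inl e}) f ≤ 5 := by
  rcases Nat.even_or_odd' m with ⟨s, hs | hs⟩
  · exact exists_even m s h hs (by omega) hh e he
  · exact exists_odd m s h hs (by omega) hh e he

/-- Theorem: For all integers `m, n ≥ 2` and every edge `e` of `C_{2m} ∨ C_{2n−1}` that belongs
to the cycle `C_{2m}` (i.e. `e` is the image under the left inclusion of an edge of `C_{2m}`),
`χ_la((C_{2m} ∨ C_{2n−1}) − e) = 5`. -/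
theorem chiLA_evenCycle_join_oddCycle_deleteCycleEdge (m n : ℕ) (hm : 2 ≤ m) (hn : 2 ≤ n)
    (e : Sym2 (Fin (2 * m))) (he : e ∈ (cycleGraph (2 * m)).edgeSet) :
    chiLA ((joinG (cycleGraph (2 * m)) (cycleGraph (2 * n - 1))).deleteEdges
      {Sym2.map Sum.inl e}) = 5 := by
  have hlow := lower_bound m n hm hn e
  obtain ⟨f, hf, hf5⟩ : ∃ f, IsLocalAntimagic ((joinG (cycleGraph (2 * m))
      (cycleGraph (2 * n - 1))).deleteEdges {Sym2.map Sum.inl e}) f ∧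
      colorCount ((joinG (cycleGraph (2 * m)) (cycleGraph (2 * n - 1))).deleteEdges
      {Sym2.map Sum.inl e}) f ≤ 5 := by
    have h1 : 2 * n - 1 = 2 * (n - 1) + 1 := by omega
    rw [h1]
    exact exists_labeling m (n - 1) hm (by omega) e he
  have hmem : (5 : ℕ) ∈ { k | ∃ f : Sym2 (Fin (2 * m) ⊕ Fin (2 * n - 1)) → ℕ,
      IsLocalAntimagic ((joinG (cycleGraph (2 * m))
      (cycleGraph (2 * n - 1))).deleteEdges {Sym2.map Sum.inl e}) f ∧
      colorCount ((joinG (cycleGraph (2 * m)) (cycleGraph (2 * n - 1))).deleteEdges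
      {Sym2.map Sum.inl e}) f = k } := ⟨f, hf, le_antisymm hf5 (hlow f hf)⟩
  unfold chiLA
  refine le_antisymm (Nat.sInf_le hmem) (le_csInf ⟨5, hmem⟩ ?_)
  rintro _ ⟨g, hg, rfl⟩
  exact hlow g hg
end

section
/- For all integers m ≥ 2 and n ≥ 1, χ_la(C_{2m} ∨ K_{2n−1}) = 2n + 1. -/
open Finset SimpleGraph
open scoped Classical

/-- The combinatorial data of a suitable labeling of the wheel on `2m` rim vertices. -/
structure WheelData (m : ℕ) where
  r : ℕ → ℕ
  s : ℕ → ℕ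
  A : ℕ
  B : ℕ
  hAB : A ≠ B
  r_pos : ∀ i < 2 * m, 1 ≤ r i
  r_le : ∀ i < 2 * m, r i ≤ 4 * m
  s_pos : ∀ i < 2 * m, 1 ≤ s i
  s_le : ∀ i < 2 * m, s i ≤ 4 * m
  r_inj : ∀ i < 2 * m, ∀ j < 2 * m, r i = r j → i = j
  s_inj : ∀ i < 2 * m, ∀ j < 2 * m, s i = s j → i = j
  rs : ∀ i < 2 * m, ∀ j < 2 * m, r i ≠ s j
  sum_zero : r (2 * m - 1) + r 0 + s 0 = A
  sum_succ : ∀ i, i + 1 < 2 * m → r i + r (i + 1) + s (i + 1) = if (i + 1) % 2 = 0 then A else B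
  hA : A < ∑ i ∈ Finset.range (2 * m), s i
  hB : B < ∑ i ∈ Finset.range (2 * m), s i

/-- Interleaving of two sequences. -/
def interl (a b : ℕ → ℕ) (i : ℕ) : ℕ := if i % 2 = 0 then a (i / 2) else b (i / 2)

theorem interl_inj {m : ℕ} {a b : ℕ → ℕ} (ha : ∀ i < m, ∀ j < m, a i = a j → i = j)
    (hb : ∀ i < m, ∀ j < m, b i = b j → i = j) (hab : ∀ i < m, ∀ j < m, a i ≠ b j) :
    ∀ i < 2 * m, ∀ j < 2 * m, interl a b i = interl a b j → i = j := by
  intro i hi j hj h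
  unfold interl at h
  have h1 : i / 2 < m := by omega
  have h2 : j / 2 < m := by omega
  split_ifs at h
  · have := ha _ h1 _ h2 h; omega
  · exact absurd h (hab _ h1 _ h2)
  · exact absurd h.symm (hab _ h2 _ h1)
  · have := hb _ h1 _ h2 h; omega

theorem interl_mem {m lo hi : ℕ} {a b : ℕ → ℕ} (ha : ∀ i < m, lo ≤ a i ∧ a i ≤ hi)
    (hb : ∀ i < m, lo ≤ b i ∧ b i ≤ hi) :
    ∀ i < 2 * m, lo ≤ interl a b i ∧ interl a b i ≤ hi := by
  intro i hi
  unfold interl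
  split_ifs
  · exact ha _ (by omega)
  · exact hb _ (by omega)

theorem wheel_of {m : ℕ} (hm : 3 ≤ m) (a b x y : ℕ → ℕ)
    (ha : ∀ i < m, 1 ≤ a i ∧ a i ≤ m)
    (hb : ∀ i < m, m + 1 ≤ b i ∧ b i ≤ 2 * m)
    (hx : ∀ i < m, 2 * m + 1 ≤ x i ∧ x i ≤ 4 * m)
    (hy : ∀ i < m, 2 * m + 1 ≤ y i ∧ y i ≤ 4 * m)
    (ia : ∀ i < m, ∀ j < m, a i = a j → i = j)
    (ib : ∀ i < m, ∀ j < m, b i = b j → i = j)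
    (ix : ∀ i < m, ∀ j < m, x i = x j → i = j)
    (iy : ∀ i < m, ∀ j < m, y i = y j → i = j)
    (ixy : ∀ i < m, ∀ j < m, y i ≠ x j)
    (h0 : b (m - 1) + a 0 + y 0 = 5 * m + 3)
    (h1 : ∀ t < m, a t + b t + x t = 5 * m)
    (h2 : ∀ t, t + 1 < m → b t + a (t + 1) + y (t + 1) = 5 * m + 3) :
    Nonempty (WheelData m) := by
  have hr : ∀ i < 2 * m, 1 ≤ interl a b i ∧ interl a b i ≤ 2 * m :=
    interl_mem (fun i hi => by have := ha i hi; omega) (fun i hi => by have := hb i hi; omega)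
  have hs : ∀ i < 2 * m, 2 * m + 1 ≤ interl y x i ∧ interl y x i ≤ 4 * m := interl_mem hy hx
  have hsum : 2 * m * (2 * m + 1) ≤ ∑ i ∈ Finset.range (2 * m), interl y x i := by
    have := Finset.card_nsmul_le_sum (Finset.range (2 * m)) (interl y x) (2 * m + 1)
      (fun i hi => (hs i (Finset.mem_range.1 hi)).1)
    simpa using this
  refine ⟨⟨interl a b, interl y x, 5 * m + 3, 5 * m, by omega, fun i hi => (hr i hi).1,
    fun i hi => by have := hr i hi; omega, fun i hi => by have := hs i hi; omega,
    fun i hi => (hs i hi).2, ?_, ?_, ?_, ?_, ?_, by nlinarith, by nlinarith⟩⟩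
  · exact interl_inj ia ib (fun i hi j hj => by have := ha i hi; have := hb j hj; omega)
  · exact interl_inj iy ix ixy
  · intro i hi j hj
    have := hr i hi; have := hs j hj; omega
  · unfold interl
    rw [if_neg (by omega), if_pos rfl, if_pos rfl]
    have : (2 * m - 1) / 2 = m - 1 := by omega
    rw [this]; simpa using h0
  · intro i hi
    unfold interl
    rcases Nat.even_or_odd' i with ⟨t, rfl | rfl⟩
    · have e1 : (2 * t + 1) / 2 = t := by omega
      have e2 : (2 * t) / 2 = t := by omega
      rw [if_pos (by omega), if_neg (by omega), if_neg (by omega), if_neg (by omega), e1, e2]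
      exact h1 t (by omega)
    · have e1 : (2 * t + 1) / 2 = t := by omega
      have e2 : (2 * t + 1 + 1) / 2 = t + 1 := by omega
      rw [if_neg (by omega), if_pos (by omega), if_pos (by omega), if_pos (by omega), e1, e2]
      exact h2 t (by omega)

theorem wheel_even (h : ℕ) (hh : 2 ≤ h) : Nonempty (WheelData (2 * h)) := by
  refine wheel_of (by omega)
    (fun t => if t < h then 2 * t + 1 else if t = h then 2 * h - 2 else
      if t = h + 1 then 2 * h else 2 * (2 * h - t))
    (fun t => if t < h - 1 then 2 * h + 2 * t + 1 else if t = h - 1 then 4 * h else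
      if t = h then 4 * h - 1 else 2 * h + 2 * (2 * h - t))
    (fun t => if t < h - 1 then 8 * h - 4 * t - 2 else if t = h - 1 then 4 * h + 1 else
      if t = h then 4 * h + 3 else if t = h + 1 then 4 * h + 2 else 4 * t)
    (fun t => if t = 0 then 8 * h else if t < h then 8 * h + 3 - 4 * t else
      if t = h then 4 * h + 5 else if t = h + 1 then 4 * h + 4 else 4 * t + 1)
    ?_ ?_ ?_ ?_ ?_ ?_ ?_ ?_ ?_ ?_ ?_ ?_
  · intro i hi; split_ifs <;> omega
  · intro i hi; split_ifs <;> omega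
  · intro i hi; split_ifs <;> omega
  · intro i hi; split_ifs <;> omega
  · intro i hi j hj; split_ifs <;> omega
  · intro i hi j hj; split_ifs <;> omega
  · intro i hi j hj; split_ifs <;> omega
  · intro i hi j hj; split_ifs <;> omega
  · intro i hi j hj; split_ifs <;> omega
  · split_ifs <;> omega
  · intro i hi; split_ifs <;> omega
  · intro i hi
    simp only [Nat.add_eq_zero_iff, one_ne_zero, and_false, if_false]
    split_ifs <;> omega

theorem wheel_odd (h : ℕ) (hh : 1 ≤ h) : Nonempty (WheelData (2 * h + 1)) := by
  refine wheel_of (by omega)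
    (fun t => if t < h then 2 * t + 1 else if t = h then 2 * h else
      if t = h + 1 then 2 * h + 1 else 2 * (2 * h + 1 - t))
    (fun t => if t < h - 1 then 2 * h + 2 * t + 2 else if t = h - 1 then 4 * h + 2 else
      if t = h then 4 * h else 2 * h + 1 + 2 * (2 * h + 1 - t))
    (fun t => if t < h - 1 then 8 * h + 2 - 4 * t else if t = h - 1 then 4 * h + 4 else
      if t = h then 4 * h + 5 else if t = h + 1 then 4 * h + 3 else 4 * t)
    (fun t => if t = 0 then 8 * h + 4 else if t < h then 8 * h + 7 - 4 * t else
      if t = h then 4 * h + 6 else if t = h + 1 then 4 * h + 7 else 4 * t + 1)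
    ?_ ?_ ?_ ?_ ?_ ?_ ?_ ?_ ?_ ?_ ?_ ?_
  · intro i hi; split_ifs <;> omega
  · intro i hi; split_ifs <;> omega
  · intro i hi; split_ifs <;> omega
  · intro i hi; split_ifs <;> omega
  · intro i hi j hj; split_ifs <;> omega
  · intro i hi j hj; split_ifs <;> omega
  · intro i hi j hj; split_ifs <;> omega
  · intro i hi j hj; split_ifs <;> omega
  · intro i hi j hj; split_ifs <;> omega
  · split_ifs <;> omega
  · intro i hi; split_ifs <;> omega
  · intro i hi
    simp only [Nat.add_eq_zero_iff, one_ne_zero, and_false, if_false]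
    split_ifs <;> omega

theorem wheel_two : Nonempty (WheelData 2) := by
  refine ⟨⟨fun i => if i = 0 then 2 else if i = 1 then 4 else if i = 2 then 3 else 7,
    fun i => if i = 0 then 6 else if i = 1 then 5 else if i = 2 then 8 else 1, 15, 11,
    by decide, by decide, by decide, by decide, by decide, by decide, by decide, by decide,
    by decide, ?_, by decide, by decide⟩⟩
  intro i hi
  have : i < 3 := by omega
  interval_cases i <;> decide

theorem wheel_exists (m : ℕ) (hm : 2 ≤ m) : Nonempty (WheelData m) := by
  rcases Nat.even_or_odd' m with ⟨h, rfl | rfl⟩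
  · rcases Nat.lt_or_ge h 2 with h2 | h2
    · obtain rfl : h = 1 := by omega
      exact wheel_two
    · exact wheel_even h h2
  · exact wheel_odd h (by omega)

theorem vertexWeight_eq {V : Type*} [Fintype V] (G : SimpleGraph V) (f : Sym2 V → ℕ) (x : V) :
    vertexWeight G f x = ∑ y, if G.Adj x y then f s(x, y) else 0 := by
  unfold vertexWeight
  rw [← Finset.sum_filter]
  symm
  apply Finset.sum_bij (fun y _ => s(x, y))
  · intro y hy
    simpa using hy
  · intro y _ z _ h
    exact Sym2.congr_right.1 h
  · intro e he
    simp only [Finset.mem_filter, SimpleGraph.mem_edgeFinset] at he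
    obtain ⟨y, rfl⟩ := Sym2.mem_iff_exists.1 he.2
    exact ⟨y, by simpa using he.1, rfl⟩
  · intros; rfl

theorem sum_vertexWeight_one {V : Type*} [Fintype V] (G : SimpleGraph V) :
    ∑ x, vertexWeight G (fun _ => 1) x = 2 * G.edgeSet.ncard := by
  have h1 : ∀ x, vertexWeight G (fun _ => 1) x = G.degree x := by
    intro x
    rw [vertexWeight_eq, ← SimpleGraph.card_neighborFinset_eq_degree, Finset.sum_boole]
    simp only [Nat.cast_id]
    congr 1
    ext y
    simp
  rw [Finset.sum_congr rfl (fun x _ => h1 x), SimpleGraph.sum_degrees_eq_twice_card_edges,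
    Set.ncard_eq_toFinset_card', SimpleGraph.edgeFinset]

section join
variable {α β : Type*} (G : SimpleGraph α) (H : SimpleGraph β)

theorem join_ll (a b : α) : (joinG G H).Adj (Sum.inl a) (Sum.inl b) ↔ G.Adj a b := by
  simp only [joinG, SimpleGraph.fromRel_adj]
  constructor
  · rintro ⟨_, h | h⟩
    · simpa using h
    · have : G.Adj b a := by simpa using h
      exact this.symm
  · intro h
    exact ⟨by simpa using h.ne, Or.inl (Or.inl ⟨a, b, rfl, rfl, h⟩)⟩

theorem join_rr (a b : β) : (joinG G H).Adj (Sum.inr a) (Sum.inr b) ↔ H.Adj a b := by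
  simp only [joinG, SimpleGraph.fromRel_adj]
  constructor
  · rintro ⟨_, h | h⟩
    · simpa using h
    · have : H.Adj b a := by simpa using h
      exact this.symm
  · intro h
    exact ⟨by simpa using h.ne, Or.inl (Or.inr (Or.inl ⟨a, b, rfl, rfl, h⟩))⟩

theorem join_lr (a : α) (b : β) : (joinG G H).Adj (Sum.inl a) (Sum.inr b) := by
  simp [joinG, SimpleGraph.fromRel_adj]

theorem join_rl (a : α) (b : β) : (joinG G H).Adj (Sum.inr b) (Sum.inl a) :=
  (join_lr G H a b).symm

end join

theorem cyc_adj {m : ℕ} (hm : 2 ≤ m) (i j : Fin (2 * m)) :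
    (cycleGraph (2 * m)).Adj i j ↔
      (j.val = i.val + 1 ∨ (i.val = 2 * m - 1 ∧ j.val = 0)) ∨
      (i.val = j.val + 1 ∨ (j.val = 2 * m - 1 ∧ i.val = 0)) := by
  rw [cycleGraph_adj']
  have key : ∀ a b : Fin (2 * m), (a - b).val = 1 ↔
      (a.val = b.val + 1 ∨ (b.val = 2 * m - 1 ∧ a.val = 0)) := by
    intro a b
    have ha := a.isLt
    have hb := b.isLt
    rcases le_or_gt b a with h | h
    · have h2 := Fin.coe_sub_iff_le.2 h
      have : b.val ≤ a.val := h
      omega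
    · have h2 := Fin.coe_sub_iff_lt.2 h
      have : a.val < b.val := h
      omega
  rw [key, key]
  tauto

theorem cyc_nbr {m : ℕ} (hm : 2 ≤ m) (i : Fin (2 * m)) : ∃ a b : Fin (2 * m), a ≠ b ∧
    (i.val = a.val + 1 ∨ (a.val = 2 * m - 1 ∧ i.val = 0)) ∧
    (b.val = i.val + 1 ∨ (i.val = 2 * m - 1 ∧ b.val = 0)) ∧
    ∀ F : Fin (2 * m) → ℕ,
      (∑ j, if (cycleGraph (2 * m)).Adj i j then F j else 0) = F a + F b := by
  have hi := i.isLt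
  obtain ⟨a, ha⟩ : ∃ a : Fin (2 * m), (i.val = a.val + 1 ∨ (a.val = 2 * m - 1 ∧ i.val = 0)) := by
    by_cases h : i.val = 0
    · exact ⟨⟨2 * m - 1, by omega⟩, Or.inr ⟨rfl, h⟩⟩
    · exact ⟨⟨i.val - 1, by omega⟩, Or.inl (by simp; omega)⟩
  obtain ⟨b, hb⟩ : ∃ b : Fin (2 * m), (b.val = i.val + 1 ∨ (i.val = 2 * m - 1 ∧ b.val = 0)) := by
    by_cases h : i.val = 2 * m - 1
    · exact ⟨⟨0, by omega⟩, Or.inr ⟨h, rfl⟩⟩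
    · exact ⟨⟨i.val + 1, by omega⟩, Or.inl rfl⟩
  have hab : a ≠ b := by
    intro h
    subst h
    omega
  refine ⟨a, b, hab, ha, hb, fun F => ?_⟩
  rw [← Finset.sum_filter, ← Finset.sum_pair hab]
  apply Finset.sum_congr _ (fun _ _ => rfl)
  ext j
  have hj := j.isLt
  simp only [Finset.mem_filter, Finset.mem_univ, true_and, cyc_adj hm, Finset.mem_insert,
    Finset.mem_singleton, Fin.ext_iff]
  omega

/-- The join in question. -/
abbrev JG (m k : ℕ) : SimpleGraph (Fin (2 * m) ⊕ Fin k) :=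
  joinG (cycleGraph (2 * m)) (⊤ : SimpleGraph (Fin k))

theorem weight_inl {m k : ℕ} (f : Sym2 (Fin (2 * m) ⊕ Fin k) → ℕ) (i : Fin (2 * m)) :
    vertexWeight (JG m k) f (Sum.inl i) =
      (∑ j, if (cycleGraph (2 * m)).Adj i j then f s(Sum.inl i, Sum.inl j) else 0) +
      ∑ j, f s(Sum.inl i, Sum.inr j) := by
  rw [vertexWeight_eq, Fintype.sum_sum_type]
  simp only [join_ll, join_lr, if_true]

theorem weight_inr {m k : ℕ} (f : Sym2 (Fin (2 * m) ⊕ Fin k) → ℕ) (j : Fin k) :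
    vertexWeight (JG m k) f (Sum.inr j) =
      (∑ i, f s(Sum.inl i, Sum.inr j)) +
      ∑ l ∈ Finset.univ.erase j, f s(Sum.inr j, Sum.inr l) := by
  rw [vertexWeight_eq, Fintype.sum_sum_type]
  simp only [join_rr, join_rl, if_true]
  congr 1
  · exact Finset.sum_congr rfl (fun i _ => by rw [Sym2.eq_swap])
  · rw [← Finset.sum_filter]
    apply Finset.sum_congr _ (fun _ _ => rfl)
    ext l
    simp [eq_comm]

theorem JG_card {m : ℕ} (hm : 2 ≤ m) (p : ℕ) :
    (JG m (2 * p + 1)).edgeSet.ncard = 4 * m * (p + 1) + (2 * p + 1).choose 2 := by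
  have h := sum_vertexWeight_one (JG m (2 * p + 1))
  rw [Fintype.sum_sum_type] at h
  have h1 : ∀ i : Fin (2 * m), vertexWeight (JG m (2 * p + 1)) (fun _ => 1) (Sum.inl i) =
      2 + (2 * p + 1) := by
    intro i
    rw [weight_inl]
    obtain ⟨a, b, -, -, -, hF⟩ := cyc_nbr hm i
    rw [hF (fun _ => 1)]
    simp
  have h2 : ∀ j : Fin (2 * p + 1), vertexWeight (JG m (2 * p + 1)) (fun _ => 1) (Sum.inr j) =
      2 * m + 2 * p := by
    intro j
    rw [weight_inr]
    simp
  simp only [h1, h2] at h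
  simp only [Finset.sum_const, Finset.card_univ, Fintype.card_fin, smul_eq_mul] at h
  have h3 : 2 * (2 * p + 1).choose 2 = (2 * p + 1) * (2 * p) := by
    have := Nat.choose_two_right (2 * p + 1)
    have e : (2 * p + 1) * (2 * p + 1 - 1) = 2 * ((2 * p + 1) * p) := by
      rw [Nat.add_sub_cancel]; ring
    rw [e, Nat.mul_div_cancel_left _ (by norm_num)] at this
    rw [this]; ring
  nlinarith

/-- Labels of rim edges. -/
def rimLab {m : ℕ} (W : WheelData m) (i j : ℕ) : ℕ :=
  if max i j = min i j + 1 then W.r (min i j) else W.r (2 * m - 1)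

/-- Offset of the label of a join edge within its block. -/
def spOff {m : ℕ} (W : WheelData m) (i j : ℕ) : ℕ :=
  if j = 0 then W.s i else if j % 2 = 1 then i + 1 else 4 * m - i

/-- Labels of join edges. -/
def spLab {m : ℕ} (W : WheelData m) (i j : ℕ) : ℕ := 4 * m * ((j + 1) / 2) + spOff W i j

/-- Labels of the edges of the complete graph. -/
def kLab (m p i j : ℕ) : ℕ := 4 * m * (p + 1) + (max i j).choose 2 + min i j + 1

/-- The labeling as a function of two vertices. -/
def gLab {m k : ℕ} (W : WheelData m) (p : ℕ) : Fin (2 * m) ⊕ Fin k → Fin (2 * m) ⊕ Fin k → ℕ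
  | Sum.inl i, Sum.inl j => rimLab W i.val j.val
  | Sum.inl i, Sum.inr j => spLab W i.val j.val
  | Sum.inr j, Sum.inl i => spLab W i.val j.val
  | Sum.inr i, Sum.inr j => kLab m p i.val j.val

theorem gLab_symm {m k : ℕ} (W : WheelData m) (p : ℕ) (x y : Fin (2 * m) ⊕ Fin k) :
    gLab W p x y = gLab W p y x := by
  rcases x with i | i <;> rcases y with j | j <;>
    simp [gLab, rimLab, kLab, max_comm i.val, min_comm i.val]

/-- The labeling. -/
def fLab {m k : ℕ} (W : WheelData m) (p : ℕ) : Sym2 (Fin (2 * m) ⊕ Fin k) → ℕ :=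
  Sym2.lift ⟨gLab W p, gLab_symm W p⟩

theorem fLab_mk {m k : ℕ} (W : WheelData m) (p : ℕ) (x y : Fin (2 * m) ⊕ Fin k) :
    fLab W p s(x, y) = gLab W p x y := rfl

theorem rimLab_eq {m : ℕ} (hm : 2 ≤ m) (W : WheelData m) {i j : ℕ}
    (h : j = i + 1 ∨ (i = 2 * m - 1 ∧ j = 0)) : rimLab W i j = W.r i := by
  unfold rimLab
  split_ifs
  · congr 1; omega
  · congr 1; omega

theorem rimLab_eq' {m : ℕ} (hm : 2 ≤ m) (W : WheelData m) {i j : ℕ}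
    (h : j = i + 1 ∨ (i = 2 * m - 1 ∧ j = 0)) : rimLab W j i = W.r i := by
  unfold rimLab
  split_ifs
  · congr 1; omega
  · congr 1; omega

theorem spOff_mem {m : ℕ} (W : WheelData m) {i : ℕ} (hi : i < 2 * m) (j : ℕ) :
    1 ≤ spOff W i j ∧ spOff W i j ≤ 4 * m := by
  have := W.s_pos i hi
  have := W.s_le i hi
  unfold spOff
  split_ifs <;> omega

theorem block_inj {M P P' u u' : ℕ} (h : M * P + u = M * P' + u') (h1 : 1 ≤ u) (h2 : u ≤ M)
    (h3 : 1 ≤ u') (h4 : u' ≤ M) : P = P' := by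
  rcases lt_trichotomy P P' with hl | hl | hl
  · have := Nat.mul_le_mul_left M (Nat.succ_le_of_lt hl)
    rw [Nat.mul_succ] at this; omega
  · exact hl
  · have := Nat.mul_le_mul_left M (Nat.succ_le_of_lt hl)
    rw [Nat.mul_succ] at this; omega

theorem spLab_inj {m : ℕ} (W : WheelData m) {i i' j j' : ℕ} (hi : i < 2 * m) (hi' : i' < 2 * m)
    (h : spLab W i j = spLab W i' j') : i = i' ∧ j = j' := by
  unfold spLab at h
  have h1 := spOff_mem W hi j
  have h2 := spOff_mem W hi' j'
  have hP := block_inj h h1.1 h1.2 h2.1 h2.2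
  rw [hP] at h
  have h := Nat.add_left_cancel h
  unfold spOff at h
  have := W.s_inj i hi i' hi'
  split_ifs at h
  all_goals omega

theorem spLab_lt {m : ℕ} (W : WheelData m) {i j j' : ℕ} (hi : i < 2 * m) (hj : j < j') :
    spLab W i j < spLab W i j' := by
  have h1 := spOff_mem W hi j
  have h2 := spOff_mem W hi j'
  unfold spLab
  rcases Nat.lt_or_ge ((j + 1) / 2) ((j' + 1) / 2) with h | h
  · have := Nat.mul_le_mul_left (4 * m) (Nat.succ_le_of_lt h)
    rw [Nat.mul_succ] at this; omega
  · have e : (j' + 1) / 2 = (j + 1) / 2 := by omega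
    rw [e]
    apply Nat.add_lt_add_left
    unfold spOff
    split_ifs <;> omega

theorem spLab_zero {m : ℕ} (W : WheelData m) (i : ℕ) : spLab W i 0 = W.s i := by
  simp [spLab, spOff]

theorem s_le_spLab {m : ℕ} (W : WheelData m) {i : ℕ} (hi : i < 2 * m) (j : ℕ) :
    W.s i ≤ spLab W i j := by
  rw [← spLab_zero W i]
  rcases Nat.eq_zero_or_pos j with rfl | h
  · exact le_rfl
  · exact (spLab_lt W hi h).le

theorem spLab_bound {m p : ℕ} (W : WheelData m) {i j : ℕ} (hi : i < 2 * m) (hj : j < 2 * p + 1) :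
    1 ≤ spLab W i j ∧ spLab W i j ≤ 4 * m * (p + 1) := by
  have h1 := spOff_mem W hi j
  unfold spLab
  have := Nat.mul_le_mul_left (4 * m) (show (j + 1) / 2 ≤ p by omega)
  rw [Nat.mul_succ]
  omega

theorem spLab_row {m : ℕ} (W : WheelData m) {i : ℕ} (hi : i < 2 * m) (p : ℕ) :
    ∑ j ∈ Finset.range (2 * p + 1), spLab W i j =
      W.s i + p * (4 * m * (p + 1) + 4 * m + 1) := by
  induction p with
  | zero => simp [spLab_zero]
  | succ p ih =>
    rw [show 2 * (p + 1) + 1 = 2 * p + 1 + 1 + 1 by ring, Finset.sum_range_succ,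
      Finset.sum_range_succ, ih]
    have e1 : spLab W i (2 * p + 1) = 4 * m * (p + 1) + (i + 1) := by
      unfold spLab spOff
      rw [if_neg (by omega), if_pos (by omega), show (2 * p + 1 + 1) / 2 = p + 1 by omega]
    have e2 : spLab W i (2 * p + 1 + 1) = 4 * m * (p + 1) + (4 * m - i) := by
      unfold spLab spOff
      rw [if_neg (by omega), if_neg (by omega), show (2 * p + 1 + 1 + 1) / 2 = p + 1 by omega]
    rw [e1, e2]
    obtain ⟨c, hc⟩ : ∃ c, 4 * m = i + c := ⟨4 * m - i, by omega⟩
    rw [hc, Nat.add_sub_cancel_left]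
    ring

theorem choose_two_step {i j : ℕ} (h : i < j) : i.choose 2 + i ≤ j.choose 2 := by
  have h1 : (i + 1).choose 2 = i.choose 2 + i := by
    rw [Nat.choose_succ_succ' i 1, Nat.choose_one_right]; exact add_comm _ _
  rw [← h1]
  exact Nat.choose_le_choose 2 h

theorem kLab_lt (m p : ℕ) {i j : ℕ} (h : i < j) :
    kLab m p i j = 4 * m * (p + 1) + j.choose 2 + i + 1 := by
  unfold kLab
  rw [max_eq_right h.le, min_eq_left h.le]

theorem kLab_comm (m p i j : ℕ) : kLab m p i j = kLab m p j i := by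
  unfold kLab
  rw [max_comm, min_comm]

theorem kLab_mono (m p : ℕ) {i j l : ℕ} (h : i < j) (hi : l ≠ i) (hj : l ≠ j) :
    kLab m p i l ≤ kLab m p j l := by
  rcases lt_or_gt_of_ne hi with h1 | h1
  · rw [kLab_comm, kLab_lt m p h1, kLab_comm, kLab_lt m p (h1.trans h)]
    have := choose_two_step h
    omega
  · rw [kLab_lt m p h1]
    rcases lt_or_gt_of_ne hj with h2 | h2
    · rw [kLab_comm, kLab_lt m p h2]
      have := choose_two_step h2
      omega
    · rw [kLab_lt m p h2]
      omega

theorem edge_cases {m k : ℕ} (hm : 2 ≤ m) (e : Sym2 (Fin (2 * m) ⊕ Fin k))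
    (he : e ∈ (JG m k).edgeSet) :
    (∃ i j : Fin (2 * m), (j.val = i.val + 1 ∨ (i.val = 2 * m - 1 ∧ j.val = 0)) ∧
      e = s(Sum.inl i, Sum.inl j)) ∨
    (∃ (i : Fin (2 * m)) (j : Fin k), e = s(Sum.inl i, Sum.inr j)) ∨
    (∃ i j : Fin k, i < j ∧ e = s(Sum.inr i, Sum.inr j)) := by
  induction e using Sym2.ind with
  | _ x y =>
    rw [SimpleGraph.mem_edgeSet] at he
    rcases x with i | i <;> rcases y with j | j
    · rw [join_ll, cyc_adj hm] at he
      rcases he with h | h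
      · exact Or.inl ⟨i, j, h, rfl⟩
      · exact Or.inl ⟨j, i, h, Sym2.eq_swap⟩
    · exact Or.inr (Or.inl ⟨i, j, rfl⟩)
    · exact Or.inr (Or.inl ⟨j, i, Sym2.eq_swap⟩)
    · rw [join_rr, SimpleGraph.top_adj] at he
      rcases lt_or_gt_of_ne he with h | h
      · exact Or.inr (Or.inr ⟨i, j, h, rfl⟩)
      · exact Or.inr (Or.inr ⟨j, i, h, Sym2.eq_swap⟩)

theorem fLab_bij {m : ℕ} (hm : 2 ≤ m) (W : WheelData m) (p : ℕ) :
    Set.BijOn (fLab (k := 2 * p + 1) W p) (JG m (2 * p + 1)).edgeSet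
      (Set.Icc 1 (JG m (2 * p + 1)).edgeSet.ncard) := by
  have hmaps : Set.MapsTo (fLab (k := 2 * p + 1) W p) (JG m (2 * p + 1)).edgeSet
      (Set.Icc 1 (JG m (2 * p + 1)).edgeSet.ncard) := by
    intro e he
    rw [JG_card hm, Set.mem_Icc]
    rcases edge_cases hm e he with ⟨i, j, h, rfl⟩ | ⟨i, j, rfl⟩ | ⟨i, j, h, rfl⟩
    · simp only [fLab_mk, gLab]
      rw [rimLab_eq hm W h]
      have h1 := W.r_pos i i.isLt
      have h2 := W.r_le i i.isLt
      rw [Nat.mul_succ]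
      omega
    · simp only [fLab_mk, gLab]
      have := spLab_bound W i.isLt j.isLt
      omega
    · simp only [fLab_mk, gLab]
      rw [kLab_lt m p h]
      have := choose_two_step j.isLt
      have : i.val < j.val := h
      omega
  have hinj : Set.InjOn (fLab (k := 2 * p + 1) W p) (JG m (2 * p + 1)).edgeSet := by
    intro e he e' he' hee
    have hrs : ∀ (i i' : Fin (2 * m)) (j' : ℕ), W.r i = spLab W i' j' → False := by
      intro i i' j' h
      rcases Nat.eq_zero_or_pos j' with rfl | h0
      · rw [spLab_zero] at h
        exact W.rs _ i.isLt _ i'.isLt h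
      · have h1 := W.r_le i i.isLt
        have h2 := (spOff_mem W i'.isLt j').1
        unfold spLab at h
        have := Nat.mul_le_mul_left (4 * m) (show 1 ≤ (j' + 1) / 2 by omega)
        omega
    have hrk : ∀ (i : Fin (2 * m)) (a b : ℕ), W.r i = 4 * m * (p + 1) + a + b + 1 → False := by
      intro i a b h
      have h1 := W.r_le i i.isLt
      rw [Nat.mul_succ] at h
      omega
    have hsk : ∀ (i : Fin (2 * m)) (j : Fin (2 * p + 1)) (a b : ℕ),
        spLab W i j = 4 * m * (p + 1) + a + b + 1 → False := by
      intro i j a b h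
      have := (spLab_bound W i.isLt j.isLt).2
      omega
    rcases edge_cases hm e he with ⟨i, j, h, rfl⟩ | ⟨i, j, rfl⟩ | ⟨i, j, h, rfl⟩ <;>
    rcases edge_cases hm e' he' with ⟨i', j', h', rfl⟩ | ⟨i', j', rfl⟩ | ⟨i', j', h', rfl⟩ <;>
    simp only [fLab_mk, gLab] at hee
    · rw [rimLab_eq hm W h, rimLab_eq hm W h'] at hee
      have h1 := W.r_inj _ i.isLt _ i'.isLt hee
      have h2 : j.val = j'.val := by
        have := j.isLt
        have := j'.isLt
        omega
      rw [Fin.ext h1, Fin.ext h2]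
    · rw [rimLab_eq hm W h] at hee
      exact (hrs _ _ _ hee).elim
    · rw [rimLab_eq hm W h, kLab_lt m p h'] at hee
      exact (hrk _ _ _ hee).elim
    · rw [rimLab_eq hm W h'] at hee
      exact (hrs _ _ _ hee.symm).elim
    · obtain ⟨h1, h2⟩ := spLab_inj W i.isLt i'.isLt hee
      rw [Fin.ext h1, Fin.ext h2]
    · rw [kLab_lt m p h'] at hee
      exact (hsk _ _ _ _ hee).elim
    · rw [rimLab_eq hm W h', kLab_lt m p h] at hee
      exact (hrk _ _ _ hee.symm).elim
    · rw [kLab_lt m p h] at hee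
      exact (hsk _ _ _ _ hee.symm).elim
    · rw [kLab_lt m p h, kLab_lt m p h'] at hee
      have hl : i.val < j.val := h
      have hl' : i'.val < j'.val := h'
      have h2 : j.val = j'.val := by
        rcases lt_trichotomy j.val j'.val with hh | hh | hh
        · have := choose_two_step hh
          omega
        · exact hh
        · have := choose_two_step hh
          omega
      have h1 : i.val = i'.val := by
        rw [h2] at hee
        omega
      rw [Fin.ext h1, Fin.ext h2]
  refine ⟨hmaps, hinj, ?_⟩
  have : fLab (k := 2 * p + 1) W p '' (JG m (2 * p + 1)).edgeSet =
      Set.Icc 1 (JG m (2 * p + 1)).edgeSet.ncard := by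
    apply Set.eq_of_subset_of_ncard_le hmaps.image_subset
    · rw [hinj.ncard_image, Set.ncard_eq_toFinset_card' (Set.Icc _ _)]
      simp
  exact this.ge

theorem fLab_weight_inl {m : ℕ} (hm : 2 ≤ m) (W : WheelData m) (p : ℕ) (i : Fin (2 * m)) :
    vertexWeight (JG m (2 * p + 1)) (fLab W p) (Sum.inl i) =
      (if i.val % 2 = 0 then W.A else W.B) + p * (4 * m * (p + 1) + 4 * m + 1) := by
  rw [weight_inl]
  obtain ⟨a, b, -, ha, hb, hF⟩ := cyc_nbr hm i
  rw [hF (fun j => fLab W p s(Sum.inl i, Sum.inl j))]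
  simp only [fLab_mk, gLab]
  rw [rimLab_eq' hm W ha, rimLab_eq hm W hb,
    Fin.sum_univ_eq_sum_range (fun j => spLab W i.val j), spLab_row W i.isLt, ← add_assoc]
  congr 1
  rcases ha with h | ⟨h1, h2⟩
  · have := W.sum_succ a.val (by have := i.isLt; omega)
    rw [h]
    exact this
  · rw [h1, h2]
    simpa using W.sum_zero

theorem fLab_weight_inr_lt {m p : ℕ} (hm : 2 ≤ m) (W : WheelData m) {j j' : Fin (2 * p + 1)}
    (h : j < j') :
    vertexWeight (JG m (2 * p + 1)) (fLab W p) (Sum.inr j) <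
      vertexWeight (JG m (2 * p + 1)) (fLab W p) (Sum.inr j') := by
  rw [weight_inr, weight_inr]
  simp only [fLab_mk, gLab]
  apply add_lt_add_of_lt_of_le
  · apply Finset.sum_lt_sum_of_nonempty
    · exact ⟨⟨0, by omega⟩, Finset.mem_univ _⟩
    · intro i _
      exact spLab_lt W i.isLt h
  · have m1 : j' ∈ Finset.univ.erase j := by simp [h.ne']
    have m2 : j ∈ Finset.univ.erase j' := by simp [h.ne]
    rw [← Finset.add_sum_erase _ _ m1, ← Finset.add_sum_erase _ _ m2, kLab_comm m p j j',
      Finset.erase_right_comm]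
    apply Nat.add_le_add_left
    apply Finset.sum_le_sum
    intro l hl
    simp only [Finset.mem_erase, Finset.mem_univ, and_true] at hl
    exact kLab_mono m p h (fun e => hl.1 (Fin.ext e)) (fun e => hl.2 (Fin.ext e))

theorem fLab_weight_inr_ge {m p : ℕ} (W : WheelData m) (j : Fin (2 * p + 1)) :
    ∑ i ∈ Finset.range (2 * m), W.s i + 2 * p * (4 * m * (p + 1)) ≤
      vertexWeight (JG m (2 * p + 1)) (fLab W p) (Sum.inr j) := by
  rw [weight_inr]
  simp only [fLab_mk, gLab]
  apply add_le_add
  · rw [← Fin.sum_univ_eq_sum_range]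
    exact Finset.sum_le_sum (fun i _ => s_le_spLab W i.isLt j)
  · have := Finset.card_nsmul_le_sum (Finset.univ.erase j) (fun l => kLab m p j.val l.val)
      (4 * m * (p + 1)) (fun l _ => by unfold kLab; omega)
    simpa using this

theorem fLab_weight_ne {m p : ℕ} (hm : 2 ≤ m) (W : WheelData m) (i : Fin (2 * m))
    (j : Fin (2 * p + 1)) :
    vertexWeight (JG m (2 * p + 1)) (fLab W p) (Sum.inl i) ≠
      vertexWeight (JG m (2 * p + 1)) (fLab W p) (Sum.inr j) := by
  apply ne_of_lt
  refine lt_of_lt_of_le ?_ (fLab_weight_inr_ge W j)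
  rw [fLab_weight_inl hm]
  apply add_lt_add_of_lt_of_le
  · split_ifs
    · exact W.hA
    · exact W.hB
  · rcases Nat.eq_zero_or_pos p with rfl | hp
    · simp
    · rw [mul_comm 2 p, mul_assoc p 2]
      apply Nat.mul_le_mul_left
      nlinarith

theorem fLab_isLA {m : ℕ} (hm : 2 ≤ m) (W : WheelData m) (p : ℕ) :
    IsLocalAntimagic (JG m (2 * p + 1)) (fLab W p) := by
  refine ⟨fLab_bij hm W p, ?_⟩
  intro x y hxy
  rcases x with i | i <;> rcases y with j | j
  · rw [join_ll, cyc_adj hm] at hxy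
    rw [fLab_weight_inl hm, fLab_weight_inl hm]
    have := W.hAB
    split_ifs <;> omega
  · exact fLab_weight_ne hm W i j
  · exact (fLab_weight_ne hm W j i).symm
  · rw [join_rr, SimpleGraph.top_adj] at hxy
    rcases lt_or_gt_of_ne hxy with h | h
    · exact (fLab_weight_inr_lt hm W h).ne
    · exact (fLab_weight_inr_lt hm W h).ne'

theorem fLab_colorCount_le {m : ℕ} (hm : 2 ≤ m) (W : WheelData m) (p : ℕ) :
    colorCount (JG m (2 * p + 1)) (fLab W p) ≤ 2 * p + 3 := by
  unfold colorCount
  set T := p * (4 * m * (p + 1) + 4 * m + 1) with hT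
  have hsub : Finset.univ.image (vertexWeight (JG m (2 * p + 1)) (fLab W p)) ⊆
      {W.A + T, W.B + T} ∪ (Finset.univ : Finset (Fin (2 * p + 1))).image
        (fun j => vertexWeight (JG m (2 * p + 1)) (fLab W p) (Sum.inr j)) := by
    intro w hw
    obtain ⟨x, -, rfl⟩ := Finset.mem_image.1 hw
    rcases x with i | j
    · apply Finset.mem_union_left
      rw [fLab_weight_inl hm, ← hT]
      split_ifs <;> simp
    · apply Finset.mem_union_right
      exact Finset.mem_image_of_mem _ (Finset.mem_univ j)
  refine (Finset.card_le_card hsub).trans ((Finset.card_union_le _ _).trans ?_)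
  have h1 : ({W.A + T, W.B + T} : Finset ℕ).card ≤ 2 := Finset.card_le_two
  have h2 := Finset.card_image_le (s := (Finset.univ : Finset (Fin (2 * p + 1))))
    (f := fun j => vertexWeight (JG m (2 * p + 1)) (fLab W p) (Sum.inr j))
  simp only [Finset.card_univ, Fintype.card_fin] at h2
  omega

theorem le_colorCount {m k : ℕ} (hm : 2 ≤ m) (f : Sym2 (Fin (2 * m) ⊕ Fin k) → ℕ)
    (hf : IsLocalAntimagic (JG m k) f) : k + 2 ≤ colorCount (JG m k) f := by
  unfold colorCount
  let q : Fin 2 ⊕ Fin k → Fin (2 * m) ⊕ Fin k :=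
    Sum.map (fun t => ⟨t.val, by have := t.isLt; omega⟩) id
  have hadj : ∀ x y, x ≠ y → (JG m k).Adj (q x) (q y) := by
    intro x y hxy
    rcases x with i | i <;> rcases y with j | j
    · simp only [q, Sum.map_inl]
      rw [join_ll, cyc_adj hm]
      have h1 : i.val ≠ j.val := fun h => hxy (by rw [Fin.ext h])
      have := i.isLt
      have := j.isLt
      simp only
      omega
    · exact join_lr _ _ _ _
    · exact join_rl _ _ _ _
    · simp only [q, Sum.map_inr, id]
      rw [join_rr, SimpleGraph.top_adj]
      exact fun h => hxy (by rw [h])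
  have hinj : Function.Injective (fun x => vertexWeight (JG m k) f (q x)) := by
    intro x y h
    by_contra hne
    exact hf.2 (hadj x y hne) h
  have h1 := Finset.card_image_of_injective Finset.univ hinj
  have h2 : Finset.univ.image (fun x => vertexWeight (JG m k) f (q x)) ⊆
      Finset.univ.image (vertexWeight (JG m k) f) := by
    intro w hw
    obtain ⟨x, -, rfl⟩ := Finset.mem_image.1 hw
    exact Finset.mem_image_of_mem _ (Finset.mem_univ (q x))
  have h3 := Finset.card_le_card h2
  rw [h1] at h3
  simp only [Finset.card_univ, Fintype.card_sum, Fintype.card_fin] at h3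
  omega

theorem chiLA_aux {m : ℕ} (hm : 2 ≤ m) (p k : ℕ) (hk : k = 2 * p + 1) :
    chiLA (joinG (cycleGraph (2 * m)) (⊤ : SimpleGraph (Fin k))) = 2 * p + 3 := by
  subst hk
  obtain ⟨W⟩ := wheel_exists m hm
  have hmem : 2 * p + 3 ∈ { n | ∃ f : Sym2 (Fin (2 * m) ⊕ Fin (2 * p + 1)) → ℕ,
      IsLocalAntimagic (JG m (2 * p + 1)) f ∧ colorCount (JG m (2 * p + 1)) f = n } :=
    ⟨fLab W p, fLab_isLA hm W p, le_antisymm (fLab_colorCount_le hm W p)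
      (le_colorCount hm _ (fLab_isLA hm W p))⟩
  apply le_antisymm
  · exact Nat.sInf_le hmem
  · apply le_csInf ⟨_, hmem⟩
    rintro n ⟨f, hf, rfl⟩
    exact le_colorCount hm f hf

/-- Theorem: For all integers `m ≥ 2` and `n ≥ 1`, `χ_la(C_{2m} ∨ K_{2n−1}) = 2n + 1`. -/
theorem chiLA_evenCycle_join_completeOdd (m n : ℕ) (hm : 2 ≤ m) (hn : 1 ≤ n) :
    chiLA (joinG (cycleGraph (2 * m)) (⊤ : SimpleGraph (Fin (2 * n - 1)))) = 2 * n + 1 := by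
  rw [chiLA_aux hm (n - 1) (2 * n - 1) (by omega)]
  omega
end
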